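/- arXiv:2504.15775 — 3 statements merged into one kernel-verified Lean document; each statement's English description precedes it below -/
import Mathlib

section
/- Let R be a ring. Then R is quasi-Frobenius if and only if R is right mininjective (R is mininjective as a right R-module), right Artinian, right strongly min-coherent and right Kasch. -/
universe u v w v'

open MulOpposite

section RightDefs
variable (R : Type u) [Ring R]

/-- A right `R`-module (i.e. an `Rᵐᵒᵖ`-module) `M` is mininjective if every homomorphism
from a minimal right ideal `I` of `R` into `M` extends to a homomorphism `R → M`. -/
def IsMininjective (M : Type v) [AddCommGroup M] [Module Rᵐᵒᵖ M] : Prop :=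
  ∀ I : Submodule Rᵐᵒᵖ R, IsAtom I → ∀ f : ↥I →ₗ[Rᵐᵒᵖ] M,
    ∃ g : R →ₗ[Rᵐᵒᵖ] M, ∀ x : ↥I, g ↑x = f x

/-- A right `R`-module `M` is min-projective if every short exact sequence
`0 → N → X → M → 0` with `N` mininjective splits (equivalently `Ext¹(M, N) = 0`
for every mininjective `N`). -/
def IsMinProjective (M : Type v) [AddCommGroup M] [Module Rᵐᵒᵖ M] : Prop :=
  ∀ (X : Type (max u v)) [AddCommGroup X] [Module Rᵐᵒᵖ X] (p : X →ₗ[Rᵐᵒᵖ] M),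
    Function.Surjective p → IsMininjective R ↥(LinearMap.ker p) →
      ∃ s : M →ₗ[Rᵐᵒᵖ] X, p ∘ₗ s = LinearMap.id

/-- `R` is right strongly min-coherent if every minimal right ideal of `R` is min-projective. -/
def RightStronglyMinCoherent : Prop :=
  ∀ I : Submodule Rᵐᵒᵖ R, IsAtom I → IsMinProjective R ↥I

/-- `R` is a right quasi V-ring if every simple right `R`-module which is not isomorphic to
any right ideal of `R` is injective. -/
def RightQuasiVRing : Prop :=
  ∀ (S : Type v) [AddCommGroup S] [Module Rᵐᵒᵖ S], IsSimpleModule Rᵐᵒᵖ S →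
    (¬ ∃ I : Submodule Rᵐᵒᵖ R, Nonempty (S ≃ₗ[Rᵐᵒᵖ] ↥I)) → Module.Injective Rᵐᵒᵖ S

/-- `R` is a right GV-ring if every simple right `R`-module is injective or projective. -/
def RightGVRing : Prop :=
  ∀ (S : Type v) [AddCommGroup S] [Module Rᵐᵒᵖ S], IsSimpleModule Rᵐᵒᵖ S →
    Module.Injective Rᵐᵒᵖ S ∨ Module.Projective Rᵐᵒᵖ S

/-- `R` is right Kasch if every simple right `R`-module is isomorphic to a right ideal of `R`. -/
def RightKasch : Prop :=
  ∀ (S : Type v) [AddCommGroup S] [Module Rᵐᵒᵖ S], IsSimpleModule Rᵐᵒᵖ S →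
    ∃ I : Submodule Rᵐᵒᵖ R, Nonempty (S ≃ₗ[Rᵐᵒᵖ] ↥I)

/-- A right `R`-module `M` is almost injective if for every monomorphism `i : A → B` and
every `f : A → M`, either `f` extends to `B`, or there are a nonzero direct summand `D` of
`B` (with projection `π : B → D`) and `h : M → D` with `h ∘ f = π ∘ i`. -/
def IsAlmostInjective (M : Type v) [AddCommGroup M] [Module Rᵐᵒᵖ M] : Prop :=
  ∀ (A B : Type w) [AddCommGroup A] [AddCommGroup B] [Module Rᵐᵒᵖ A] [Module Rᵐᵒᵖ B]
    (i : A →ₗ[Rᵐᵒᵖ] B), Function.Injective i → ∀ f : A →ₗ[Rᵐᵒᵖ] M,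
    (∃ g : B →ₗ[Rᵐᵒᵖ] M, g ∘ₗ i = f) ∨
    (∃ D : Submodule Rᵐᵒᵖ B, D ≠ ⊥ ∧ ∃ π : B →ₗ[Rᵐᵒᵖ] ↥D,
      π ∘ₗ D.subtype = LinearMap.id ∧ ∃ h : M →ₗ[Rᵐᵒᵖ] ↥D, h ∘ₗ f = π ∘ₗ i)

/-- `R` is a right almost V-ring if every simple right `R`-module is almost injective. -/
def RightAlmostVRing : Prop :=
  ∀ (S : Type v) [AddCommGroup S] [Module Rᵐᵒᵖ S], IsSimpleModule Rᵐᵒᵖ S →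
    IsAlmostInjective.{u, v, w} R S

/-- `R` is right serial if `R`, as a right `R`-module, is an internal direct sum of finitely
many uniserial submodules. -/
def RightSerial : Prop :=
  ∃ (n : ℕ) (c : Fin n → Submodule Rᵐᵒᵖ R), DirectSum.IsInternal c ∧
    ∀ i, ∀ N P : Submodule Rᵐᵒᵖ ↥(c i), N ≤ P ∨ P ≤ N

/-- `R` is left serial if `R`, as a left `R`-module, is an internal direct sum of finitely
many uniserial submodules. -/
def LeftSerial : Prop :=
  ∃ (n : ℕ) (c : Fin n → Submodule R R), DirectSum.IsInternal c ∧
    ∀ i, ∀ N P : Submodule R ↥(c i), N ≤ P ∨ P ≤ N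

/-- The square of the Jacobson radical of `R` is zero. -/
def JacobsonSquareZero : Prop :=
  ∀ x ∈ (⊥ : TwoSidedIdeal R).jacobson, ∀ y ∈ (⊥ : TwoSidedIdeal R).jacobson, x * y = 0

end RightDefs

namespace QF

section split
variable {A : Type u} [Ring A]

theorem baer_of_split [IsArtinianRing A] (Q : Type u) [AddCommGroup Q] [Module A Q]
    (H : ∀ (S X : Type u) [AddCommGroup S] [AddCommGroup X] [Module A S] [Module A X]
      (p : X →ₗ[A] S), IsSimpleModule A S → Function.Surjective p →
      Nonempty (Q ≃ₗ[A] LinearMap.ker p) → ∃ s : S →ₗ[A] X, p ∘ₗ s = LinearMap.id) :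
    Module.Baer A Q := by
  intro I g
  have : Fact (Function.Injective I.subtype) := ⟨Subtype.val_injective⟩
  set M := Module.Baer.extensionOfMax I.subtype g with hM
  have htop : M.domain = ⊤ := by
    by_contra hne
    obtain ⟨K, hK⟩ := exists_covBy_of_wellFoundedLT (α := Submodule A A) (a := M.domain)
      (by rwa [isMax_iff_eq_top])
    have hJK : M.domain ≤ K := hK.le
    have hs := (covBy_iff_quot_is_simple hJK).1 hK
    let f : M.domain →ₗ[A] Q := M.toLinearPMap.toFun
    let inc : M.domain →ₗ[A] K := Submodule.inclusion hJK
    let W : Submodule A (Q × K) := LinearMap.range (LinearMap.prod f (-inc))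
    let J' : Submodule A K := Submodule.comap K.subtype M.domain
    let p : ((Q × K) ⧸ W) →ₗ[A] (K ⧸ J') := W.liftQ (J'.mkQ ∘ₗ LinearMap.snd A Q K) (by
      rintro _ ⟨j, rfl⟩
      simp [J', inc])
    have hp : Function.Surjective p := by
      intro y
      obtain ⟨k, rfl⟩ := J'.mkQ_surjective y
      exact ⟨W.mkQ (0, k), by simp [p]⟩
    let i : Q →ₗ[A] ((Q × K) ⧸ W) := W.mkQ ∘ₗ LinearMap.inl A Q K
    have hi : Function.Injective i := by
      rw [← LinearMap.ker_eq_bot, LinearMap.ker_eq_bot']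
      intro q hq
      have : (q, (0 : K)) ∈ W := by simpa [i] using hq
      obtain ⟨j, hj⟩ := this
      have h1 : f j = q := congrArg Prod.fst hj
      have h2 : -inc j = 0 := congrArg Prod.snd hj
      have h3 : j = 0 := by
        apply Submodule.inclusion_injective hJK
        rw [map_zero]; exact neg_eq_zero.1 h2
      rw [← h1, h3, map_zero]
    have hmk : ∀ (k : K) (hk : (k : A) ∈ M.domain), W.mkQ (0, k) = i (f ⟨k, hk⟩) := by
      intro k hk
      rw [← sub_eq_zero, LinearMap.comp_apply, ← map_sub, Submodule.mkQ_apply,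
        Submodule.Quotient.mk_eq_zero]
      refine ⟨-⟨k, hk⟩, ?_⟩
      ext <;> simp [inc]
    have hr : LinearMap.range i = LinearMap.ker p := by
      apply le_antisymm
      · rintro _ ⟨q, rfl⟩
        simp [p, i]
      · intro x hx
        obtain ⟨⟨q, k⟩, rfl⟩ := W.mkQ_surjective x
        have hk : (k : A) ∈ M.domain := by
          have : J'.mkQ k = 0 := by simpa [p] using hx
          simpa [J'] using this
        refine ⟨q + f ⟨k, hk⟩, ?_⟩
        rw [map_add, ← hmk k hk]
        simp only [i, LinearMap.comp_apply]
        rw [← map_add]; simp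
    let e : Q ≃ₗ[A] LinearMap.ker p := (LinearEquiv.ofInjective i hi).trans (LinearEquiv.ofEq _ _ hr)
    have he : ∀ q, ((e q : LinearMap.ker p) : (Q × K) ⧸ W) = i q := fun q => rfl
    obtain ⟨s, hs'⟩ := H (K ⧸ J') _ p hs hp ⟨e⟩
    have hs2 : ∀ y, p (s y) = y := fun y => LinearMap.congr_fun hs' y
    let ρ : ((Q × K) ⧸ W) →ₗ[A] LinearMap.ker p :=
      LinearMap.codRestrict _ (LinearMap.id - s ∘ₗ p) (by intro x; simp [hs2])
    let hh : K →ₗ[A] Q := e.symm.toLinearMap ∘ₗ ρ ∘ₗ W.mkQ ∘ₗ LinearMap.inr A Q K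
    have hext : ∀ (k : K) (hk : (k : A) ∈ M.domain), hh k = f ⟨k, hk⟩ := by
      intro k hk
      simp only [hh, LinearMap.comp_apply, LinearEquiv.coe_coe]
      rw [LinearEquiv.symm_apply_eq]
      apply Subtype.ext
      rw [he, LinearMap.inr_apply, hmk k hk]
      have : p (i (f ⟨k, hk⟩)) = 0 := by
        rw [← LinearMap.mem_ker, ← hr]; exact ⟨_, rfl⟩
      simp [ρ, this]
    let M' : Module.Baer.ExtensionOf I.subtype g :=
      { domain := K
        toFun := hh
        le := M.le.trans hJK
        is_extension := by
          intro m
          rw [M.is_extension m]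
          exact (hext ⟨I.subtype m, _⟩ (M.le ⟨m, rfl⟩)).symm }
    have hle : M ≤ M' := ⟨hJK, by
      rintro ⟨x, hx⟩ ⟨y, hy⟩ hxy
      simp only at hxy
      subst hxy
      exact (hext ⟨x, hy⟩ hx).symm⟩
    have := Module.Baer.extensionOfMax_is_max I.subtype g M' hle
    have h3 : M'.domain = M.domain := by rw [this]
    exact hK.lt.ne h3.symm
  refine ⟨M.toLinearPMap.toFun ∘ₗ LinearMap.codRestrict M.domain LinearMap.id
    (by intro c; rw [htop]; trivial), ?_⟩
  intro x hx
  exact (M.is_extension ⟨x, hx⟩).symm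

/-- a surjection with Baer kernel splits -/
theorem split_of_baer_ker {X S : Type*} [AddCommGroup S] [AddCommGroup X] [Module A S] [Module A X]
    (p : X →ₗ[A] S) (hp : Function.Surjective p) (h : Module.Baer A (LinearMap.ker p)) :
    ∃ s : S →ₗ[A] X, p ∘ₗ s = LinearMap.id := by
  obtain ⟨ρ, hρ⟩ := h.extension_property (LinearMap.ker p).subtype Subtype.val_injective
    LinearMap.id
  have hρ' : ∀ x (hx : x ∈ LinearMap.ker p), ρ x = ⟨x, hx⟩ := fun x hx =>
    LinearMap.congr_fun hρ ⟨x, hx⟩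
  let q : LinearMap.ker ρ →ₗ[A] S := p ∘ₗ (LinearMap.ker ρ).subtype
  have hq : Function.Bijective q := by
    constructor
    · rw [← LinearMap.ker_eq_bot, LinearMap.ker_eq_bot']
      rintro ⟨x, hx⟩ hqx
      have h1 : ρ x = ⟨x, hqx⟩ := hρ' x hqx
      rw [LinearMap.mem_ker] at hx
      rw [hx] at h1
      exact Subtype.ext (congrArg Subtype.val h1).symm
    · intro y
      obtain ⟨x, rfl⟩ := hp y
      have hk : p (ρ x : X) = 0 := (ρ x).2
      refine ⟨⟨x - ρ x, ?_⟩, ?_⟩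
      · rw [LinearMap.mem_ker, map_sub, hρ' _ (ρ x).2]; simp
      · simp [q, hk]
  let e := LinearEquiv.ofBijective q hq
  refine ⟨(LinearMap.ker ρ).subtype ∘ₗ e.symm.toLinearMap, ?_⟩
  ext y
  exact e.apply_symm_apply y

theorem baer_retract {M P : Type*} [AddCommGroup M] [AddCommGroup P] [Module A M] [Module A P]
    (hM : Module.Baer A M) (i : P →ₗ[A] M) (r : M →ₗ[A] P) (h : r ∘ₗ i = LinearMap.id) :
    Module.Baer A P := by
  intro I g
  obtain ⟨g', hg'⟩ := hM I (i ∘ₗ g)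
  refine ⟨r ∘ₗ g', fun x hx => ?_⟩
  rw [LinearMap.comp_apply, hg' x hx]
  exact LinearMap.congr_fun h _

theorem baer_prod {M P : Type*} [AddCommGroup M] [AddCommGroup P] [Module A M] [Module A P]
    (hM : Module.Baer A M) (hP : Module.Baer A P) : Module.Baer A (M × P) := by
  intro I g
  obtain ⟨g1, h1⟩ := hM I (LinearMap.fst A M P ∘ₗ g)
  obtain ⟨g2, h2⟩ := hP I (LinearMap.snd A M P ∘ₗ g)
  exact ⟨g1.prod g2, fun x hx => Prod.ext (h1 x hx) (h2 x hx)⟩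

theorem exists_baer_submodule [IsArtinianRing A] (hA : Module.Baer A A) {N : Type*}
    [AddCommGroup N] [Module A N] (I : Ideal A) (hI : I ≠ ⊥) (g : A →ₗ[A] N)
    (hg : ∀ x ∈ I, g x = 0 → x = 0) : ∃ E : Submodule A N, E ≠ ⊥ ∧ Module.Baer A E := by
  obtain ⟨P, ⟨hIP, hP⟩, hmin⟩ := (wellFounded_lt (α := Submodule A A)).has_min
    {P : Submodule A A | I ≤ P ∧ Module.Baer A P}
    ⟨⊤, le_top, Module.Baer.of_equiv (Submodule.topEquiv (R := A) (M := A)).symm hA⟩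
  obtain ⟨ψ, hψ⟩ := hP.extension_property (g ∘ₗ I.subtype) (by
    rw [← LinearMap.ker_eq_bot, LinearMap.ker_eq_bot']
    rintro ⟨x, hx⟩ h
    exact Subtype.ext (hg x hx h)) (Submodule.inclusion hIP)
  have hψ' : ∀ x (hx : x ∈ I), ψ (g x) = ⟨x, hIP hx⟩ := fun x hx =>
    LinearMap.congr_fun hψ ⟨x, hx⟩
  let φ : Module.End A P := ψ ∘ₗ g ∘ₗ P.subtype
  have hφ : ∀ x (hx : x ∈ I), φ ⟨x, hIP hx⟩ = ⟨x, hIP hx⟩ := fun x hx => hψ' x hx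
  obtain ⟨n, hn⟩ := Filter.eventually_atTop.1 φ.eventually_isCompl_ker_pow_range_pow
  have hc := hn (n + 1) (by omega)
  set Φ := φ ^ (n + 1) with hΦ
  have hΦI : ∀ x (hx : x ∈ I), Φ ⟨x, hIP hx⟩ = ⟨x, hIP hx⟩ := by
    intro x hx
    rw [hΦ]
    generalize n + 1 = m
    induction m with
    | zero => rfl
    | succ m ih => rw [pow_succ, Module.End.mul_apply, hφ x hx, ih]
  let P' : Submodule A A := (LinearMap.range Φ).map P.subtype
  have hP'le : P' ≤ P := Submodule.map_subtype_le _ _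
  have hbr : Module.Baer A (LinearMap.range Φ) := by
    refine baer_retract hP (LinearMap.range Φ).subtype
      (Submodule.projectionOnto _ _ hc.symm) ?_
    ext1 x
    exact Submodule.projectionOnto_apply_left hc.symm x
  have hP'mem : I ≤ P' ∧ Module.Baer A P' := by
    constructor
    · intro x hx
      exact ⟨⟨x, hIP hx⟩, ⟨_, hΦI x hx⟩, rfl⟩
    · exact Module.Baer.of_equiv (Submodule.equivSubtypeMap P (LinearMap.range Φ)) hbr
  have hP'eq : P' = P := by
    by_contra hne
    exact hmin P' hP'mem (lt_of_le_of_ne hP'le hne)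
  have hrt : LinearMap.range Φ = ⊤ := by
    apply Submodule.map_injective_of_injective P.subtype_injective
    simpa using hP'eq
  have hker : LinearMap.ker Φ = ⊥ := by
    have := hc.disjoint
    rw [hrt] at this
    simpa using this
  have hgP : Function.Injective (g ∘ₗ P.subtype) := by
    rw [← LinearMap.ker_eq_bot, LinearMap.ker_eq_bot']
    intro x hx
    have h0 : φ x = 0 := by
      change ψ ((g ∘ₗ P.subtype) x) = 0
      rw [hx, map_zero]
    have : x ∈ LinearMap.ker Φ := by
      rw [LinearMap.mem_ker, hΦ, pow_succ, Module.End.mul_apply, h0, map_zero]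
    rw [hker] at this
    simpa using this
  refine ⟨LinearMap.range (g ∘ₗ P.subtype), ?_,
    Module.Baer.of_equiv (LinearEquiv.ofInjective _ hgP) hP⟩
  intro hb
  obtain ⟨x, hx, hx0⟩ := Submodule.exists_mem_ne_zero_of_ne_bot hI
  have : g x ∈ LinearMap.range (g ∘ₗ P.subtype) := ⟨⟨x, hIP hx⟩, rfl⟩
  rw [hb] at this
  exact hx0 (hg x hx (by simpa using this))

end split


section kasch
variable {A : Type u} [Ring A]

/-- left-module version of mininjectivity -/
def MI (A : Type u) [Ring A] (N : Type v) [AddCommGroup N] [Module A N] : Prop :=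
  ∀ I : Ideal A, IsSimpleModule A I → ∀ f : I →ₗ[A] N, ∃ g : A →ₗ[A] N, ∀ x : I, g x = f x

theorem exists_simple_le [IsArtinianRing A] {N : Type*} [AddCommGroup N] [Module A N]
    (N' : Submodule A N) (h : N' ≠ ⊥) : ∃ T : Submodule A N, T ≤ N' ∧ IsSimpleModule A T := by
  obtain ⟨x, hx, hx0⟩ := Submodule.exists_mem_ne_zero_of_ne_bot h
  have : IsArtinian A (Submodule.span A {x}) := by
    rw [LinearMap.span_singleton_eq_range]
    infer_instance
  have : Nontrivial (Submodule.span A {x}) := by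
    rw [Submodule.nontrivial_iff_ne_bot]
    simpa using hx0
  obtain ⟨T, hT⟩ := IsAtomic.exists_atom (Submodule A (Submodule.span A {x}))
  have hT' := isSimpleModule_iff_isAtom.2 hT
  refine ⟨T.map (Submodule.span A {x}).subtype, ?_, ?_⟩
  · refine (Submodule.map_subtype_le _ _).trans ?_
    simpa using hx
  · exact IsSimpleModule.congr (Submodule.equivSubtypeMap _ T).symm

theorem baer_sSup [IsNoetherianRing A] {N : Type*} [AddCommGroup N] [Module A N]
    (c : Set (Submodule A N)) (hc : IsChain (· ≤ ·) c) (hne : c.Nonempty)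
    (h : ∀ Q ∈ c, Module.Baer A Q) : Module.Baer A (sSup c : Submodule A N) := by
  intro I g
  have hfg : (LinearMap.range ((sSup c : Submodule A N).subtype ∘ₗ g)).FG := by
    have : Module.Finite A I := Module.Finite.iff_fg.2 (IsNoetherian.noetherian I)
    exact Submodule.FG.map (f := _) (Module.Finite.fg_top) |> fun h => by
      rw [LinearMap.range_eq_map]; exact h
  have hle : LinearMap.range ((sSup c : Submodule A N).subtype ∘ₗ g) ≤ sSup c := by
    rintro _ ⟨x, rfl⟩; exact (g x).2
  obtain ⟨Q, hQ, hQle⟩ : ∃ Q ∈ c, LinearMap.range ((sSup c : Submodule A N).subtype ∘ₗ g) ≤ Q := by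
    have hk := (Submodule.fg_iff_compact _).1 hfg
    exact (CompleteLattice.isCompactElement_iff_le_of_directed_sSup_le _ _).1 hk c hne
      hc.directedOn hle
  obtain ⟨g', hg'⟩ := h Q hQ I (LinearMap.codRestrict Q ((sSup c : Submodule A N).subtype ∘ₗ g)
    (fun x => hQle ⟨x, rfl⟩))
  refine ⟨Submodule.inclusion (le_sSup hQ) ∘ₗ g', fun x hx => ?_⟩
  apply Subtype.ext
  rw [LinearMap.comp_apply, hg' x hx]
  rfl

theorem baer_of_MI [IsArtinianRing A] (hA : Module.Baer A A)
    (hK : ∀ (S : Type u) [AddCommGroup S] [Module A S], IsSimpleModule A S →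
      ∃ I : Ideal A, Nonempty (S ≃ₗ[A] I))
    (N : Type u) [AddCommGroup N] [Module A N] (hN : MI A N) : Module.Baer A N := by
  obtain ⟨Q, -, hQ⟩ := zorn_le_nonempty₀ {Q : Submodule A N | Module.Baer A Q}
    (fun c hcs hc y hy => ⟨sSup c, baer_sSup c hc ⟨y, hy⟩ hcs, fun z hz => le_sSup hz⟩) ⊥
    (fun I g => ⟨0, fun x hx => Subsingleton.elim _ _⟩)
  have hQb : Module.Baer A Q := hQ.prop
  obtain ⟨r, hr⟩ := hQb.extension_property Q.subtype Subtype.val_injective LinearMap.id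
  have hr' : ∀ x (hx : x ∈ Q), r x = ⟨x, hx⟩ := fun x hx => LinearMap.congr_fun hr ⟨x, hx⟩
  by_cases hb : LinearMap.ker r = ⊥
  · have : Function.Bijective r := by
      refine ⟨LinearMap.ker_eq_bot.1 hb, fun q => ⟨q, hr' _ q.2⟩⟩
    exact Module.Baer.of_equiv (LinearEquiv.ofBijective r this).symm hQb
  exfalso
  obtain ⟨T, hT, hTs⟩ := exists_simple_le _ hb
  obtain ⟨I, ⟨e⟩⟩ := hK T hTs
  have hIs : IsSimpleModule A I := IsSimpleModule.congr e.symm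
  obtain ⟨g, hg⟩ := hN I hIs (T.subtype ∘ₗ e.symm.toLinearMap)
  let g' : A →ₗ[A] LinearMap.ker r := LinearMap.codRestrict _ (g - Q.subtype ∘ₗ r ∘ₗ g) (by
    intro x
    rw [LinearMap.mem_ker]
    simp [hr' _ (r (g x)).2])
  obtain ⟨E, hE0, hE⟩ := exists_baer_submodule hA I
    (isSimpleModule_iff_isAtom.1 hIs).1 g' (by
      intro x hx h0
      have h1 : g x = (e.symm ⟨x, hx⟩ : N) := hg ⟨x, hx⟩
      have h2 : r (g x) = 0 := by rw [h1]; exact hT (e.symm ⟨x, hx⟩).2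
      have h3 : g x = 0 := by
        have := congrArg Subtype.val h0
        simpa [g', h2] using this
      rw [h1] at h3
      have h4 : e.symm ⟨x, hx⟩ = 0 := Subtype.ext h3
      rw [LinearEquiv.map_eq_zero_iff] at h4
      exact congrArg Subtype.val h4)
  let ι : (Q × E) →ₗ[A] N :=
    LinearMap.coprod Q.subtype ((LinearMap.ker r).subtype ∘ₗ E.subtype)
  have hrE : ∀ z : E, r ((z : LinearMap.ker r) : N) = 0 := fun z => z.1.2
  have hι : Function.Injective ι := by
    rw [← LinearMap.ker_eq_bot, LinearMap.ker_eq_bot']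
    rintro ⟨q, z⟩ h
    have h0 : (q : N) + ((z : LinearMap.ker r) : N) = 0 := h
    have h1 : r ((q : N) + ((z : LinearMap.ker r) : N)) = 0 := by rw [h0, map_zero]
    rw [map_add, hrE, add_zero, hr' _ q.2] at h1
    have h2 : q = 0 := h1
    subst h2
    have h3 : ((z : LinearMap.ker r) : N) = 0 := by simpa using h0
    have h4 : z = 0 := Subtype.ext (Subtype.ext h3)
    rw [h4]; rfl
  have hb2 : Module.Baer A (LinearMap.range ι) :=
    Module.Baer.of_equiv (LinearEquiv.ofInjective ι hι) (baer_prod hQb hE)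
  have hle : Q ≤ LinearMap.range ι := fun q hq => ⟨(⟨q, hq⟩, 0), by simp [ι]⟩
  have hge : LinearMap.range ι ≤ Q := hQ.le_of_ge hb2 hle
  obtain ⟨z, hz, hz0⟩ := Submodule.exists_mem_ne_zero_of_ne_bot hE0
  have hzQ : (z : N) ∈ Q := hge ⟨(0, ⟨z, hz⟩), by simp [ι]⟩
  have h5 := hr' _ hzQ
  have h6 : r (z : N) = 0 := z.2
  rw [h6] at h5
  exact hz0 (Subtype.ext (congrArg Subtype.val h5).symm)

theorem iso_of_ker_le {U S S' : Type*} [AddCommGroup U] [AddCommGroup S] [AddCommGroup S']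
    [Module A U] [Module A S] [Module A S'] [IsSimpleModule A S] [IsSimpleModule A S']
    (α : U →ₗ[A] S') (β : U →ₗ[A] S) (h : LinearMap.ker α ≤ LinearMap.ker β) (hβ : β ≠ 0) :
    Nonempty (S ≃ₗ[A] S') := by
  have hα : α ≠ 0 := by
    rintro rfl
    apply hβ
    ext x
    exact h (by simp)
  let e1 := α.quotKerEquivOfSurjective (LinearMap.surjective_of_ne_zero hα)
  let e2 := β.quotKerEquivOfSurjective (LinearMap.surjective_of_ne_zero hβ)
  have c1 : IsCoatom (LinearMap.ker α) := isSimpleModule_iff_isCoatom.1 (IsSimpleModule.congr e1)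
  have c2 : IsCoatom (LinearMap.ker β) := isSimpleModule_iff_isCoatom.1 (IsSimpleModule.congr e2)
  have heq : LinearMap.ker α = LinearMap.ker β := by
    by_contra hne
    exact c2.1 (c1.2 _ (lt_of_le_of_ne h hne))
  exact ⟨e2.symm.trans ((Submodule.quotEquivOfEq _ _ heq.symm).trans e1)⟩

theorem iso_of_finset {S S' : Type*} [AddCommGroup S] [AddCommGroup S']
    [Module A S] [Module A S'] [IsSimpleModule A S] [IsSimpleModule A S']
    (s0 : S) (h0 : s0 ≠ 0) (F : Finset S')
    (h : (⨅ s ∈ F, LinearMap.ker (LinearMap.toSpanSingleton A S' s)) ≤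
      LinearMap.ker (LinearMap.toSpanSingleton A S s0)) : Nonempty (S ≃ₗ[A] S') := by
  classical
  induction F using Finset.induction_on with
  | empty =>
    exfalso
    have : (1 : A) ∈ LinearMap.ker (LinearMap.toSpanSingleton A S s0) := h (by simp)
    exact h0 (by simpa using this)
  | insert s F hs ih =>
    set K : Ideal A := ⨅ s ∈ F, LinearMap.ker (LinearMap.toSpanSingleton A S' s) with hK
    by_cases hc : K ≤ LinearMap.ker (LinearMap.toSpanSingleton A S s0)
    · exact ih hc
    · rw [Finset.iInf_insert] at h
      refine iso_of_ker_le (LinearMap.toSpanSingleton A S' s ∘ₗ K.subtype)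
        (LinearMap.toSpanSingleton A S s0 ∘ₗ K.subtype) ?_ ?_
      · rintro ⟨x, hx⟩ hx'
        exact h ⟨hx', hx⟩
      · intro hz
        apply hc
        intro x hx
        exact LinearMap.congr_fun hz ⟨x, hx⟩

theorem iso_of_ann [IsArtinianRing A] {S S' : Type*} [AddCommGroup S] [AddCommGroup S']
    [Module A S] [Module A S'] [IsSimpleModule A S] [IsSimpleModule A S']
    (h : Module.annihilator A S' ≤ Module.annihilator A S) : Nonempty (S ≃ₗ[A] S') := by
  classical
  have : Nontrivial S := IsSimpleModule.nontrivial A S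
  obtain ⟨s0, hs0⟩ := exists_ne (0 : S)
  let K : Finset S' → Ideal A := fun F =>
    ⨅ s ∈ F, LinearMap.ker (LinearMap.toSpanSingleton A S' s)
  obtain ⟨_, ⟨F, rfl⟩, hmin⟩ := (wellFounded_lt (α := Submodule A A)).has_min (Set.range K)
    ⟨_, ⟨∅, rfl⟩⟩
  refine iso_of_finset s0 hs0 F ?_
  intro a ha
  have h1 : a ∈ Module.annihilator A S' := by
    rw [Module.mem_annihilator]
    intro s
    have hle : K (insert s F) ≤ K F := by
      simp only [K, Finset.iInf_insert]; exact inf_le_right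
    have heq : K (insert s F) = K F := by
      by_contra hne
      exact hmin _ ⟨_, rfl⟩ (lt_of_le_of_ne hle hne)
    have ha' : a ∈ K (insert s F) := by rw [heq]; exact ha
    simp only [K, Finset.iInf_insert] at ha'
    exact ha'.1
  exact Module.mem_annihilator.1 (h h1) s0

/-- prime condition on a subset of a (noncommutative) ring -/
def PrimeLike (Q : Set A) : Prop :=
  (1 : A) ∉ Q ∧ ∀ a b, (∀ x, a * x * b ∈ Q) → a ∈ Q ∨ b ∈ Q

theorem ann_prime (S : Type*) [AddCommGroup S] [Module A S] [IsSimpleModule A S] :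
    PrimeLike (A := A) (Module.annihilator A S : Set A) := by
  have : Nontrivial S := IsSimpleModule.nontrivial A S
  constructor
  · intro h
    obtain ⟨s0, hs0⟩ := exists_ne (0 : S)
    exact hs0 (by simpa using Module.mem_annihilator.1 h s0)
  · intro a b h
    by_contra! hc
    obtain ⟨ha, hb⟩ := hc
    simp only [SetLike.mem_coe, Module.mem_annihilator, not_forall] at ha hb h
    obtain ⟨s, hs⟩ := ha
    obtain ⟨t, ht⟩ := hb
    obtain ⟨x, hx⟩ := IsSimpleModule.toSpanSingleton_surjective A ht s
    rw [LinearMap.toSpanSingleton_apply] at hx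
    apply hs
    rw [← hx, smul_smul, smul_smul]
    exact h x t

/-- the common right annihilator of all images of `S` in `A` -/
def LS (A : Type u) [Ring A] (S : Type*) [AddCommGroup S] [Module A S] : Set A :=
  {a | ∀ (f : S →ₗ[A] A) (s : S), f s * a = 0}

theorem LS_mul_left {S : Type*} [AddCommGroup S] [Module A S] {a : A} (ha : a ∈ LS A S) (x : A) :
    x * a ∈ LS A S := by
  intro f s
  rw [← mul_assoc]
  exact ha (LinearMap.toSpanSingleton A A x ∘ₗ f) s

theorem LS_mul_right {S : Type*} [AddCommGroup S] [Module A S] {a : A} (ha : a ∈ LS A S) (x : A) :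
    a * x ∈ LS A S := by
  intro f s
  rw [← mul_assoc, ha f s, zero_mul]

theorem LS_congr {S S' : Type*} [AddCommGroup S] [Module A S] [AddCommGroup S'] [Module A S']
    (e : S ≃ₗ[A] S') : LS A S = LS A S' := by
  ext a
  constructor
  · intro h f s
    simpa using h (f ∘ₗ e.toLinearMap) (e.symm s)
  · intro h f s
    simpa using h (f ∘ₗ e.symm.toLinearMap) (e s)

theorem LS_prime (hA : Module.Baer A A) (S : Type*) [AddCommGroup S] [Module A S]
    [IsSimpleModule A S] (h1 : (1 : A) ∉ LS A S) : PrimeLike (LS A S) := by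
  refine ⟨h1, fun a b h => ?_⟩
  by_contra! hc
  obtain ⟨ha, hb⟩ := hc
  apply hb
  intro g s'
  simp only [LS, Set.mem_ofPred_eq, not_forall] at ha
  obtain ⟨f, s, hfs⟩ := ha
  let f' : S →ₗ[A] A := LinearMap.toSpanSingleton A A a ∘ₗ f
  have hf' : f' ≠ 0 := fun h0 => hfs (LinearMap.congr_fun h0 s)
  obtain ⟨k, hk⟩ := hA.extension_property f' (LinearMap.injective_of_ne_zero hf') g
  have : g s' = f s' * a * k 1 := by
    rw [← hk]
    change k (f s' * a) = _
    rw [← smul_eq_mul (a := f s' * a) (b := k 1), ← map_smul, smul_eq_mul, mul_one]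
  rw [this, mul_assoc, mul_assoc, ← mul_assoc a]
  have killed_by_b := h (k 1) f s'
  simpa only [mul_assoc] using killed_by_b

/-- an element killing the socle on the right annihilates every simple module -/
theorem mem_ann_of_forall_LS [IsArtinianRing A] (c : A)
    (hc : ∀ T : Ideal A, IsSimpleModule A T → c ∈ LS A T)
    (S : Type*) [AddCommGroup S] [Module A S] [IsSimpleModule A S] :
    c ∈ Module.annihilator A S := by
  rw [Module.mem_annihilator]
  intro s
  by_contra hne
  obtain ⟨x, hx⟩ := IsSimpleModule.toSpanSingleton_surjective A hne s
  rw [LinearMap.toSpanSingleton_apply, smul_smul] at hx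
  let R : A →ₗ[A] A := LinearMap.toSpanSingleton A A (1 - x * c)
  have hR : Function.Injective R := by
    rw [← LinearMap.ker_eq_bot]
    by_contra hk
    obtain ⟨T, hT, hTs⟩ := exists_simple_le _ hk
    have := IsSimpleModule.nontrivial A T
    obtain ⟨t, ht⟩ := exists_ne (0 : T)
    apply ht
    have h1 : (t : A) * (1 - x * c) = 0 := hT t.2
    have h2 : (t : A) * (x * c) = 0 := LS_mul_left (hc T hTs) x T.subtype t
    rw [mul_sub, h2, mul_one, sub_zero] at h1
    exact Subtype.ext h1
  obtain ⟨y, hy⟩ := IsArtinian.surjective_of_injective_endomorphism R hR 1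
  have hy' : y * (1 - x * c) = 1 := hy
  have : s = 0 := by
    rw [← one_smul A s, ← hy', mul_smul, sub_smul, one_smul, hx, sub_self, smul_zero]
  exact hne (by rw [this, smul_zero])

/-- finitely many primitive ideals below every prime -/
theorem exists_finite_primitive (A : Type u) [Ring A] [IsArtinianRing A] :
    ∃ F : Set (Ideal A), F.Finite ∧
      (∀ P ∈ F, ∃ m : Ideal A, m.IsMaximal ∧ P = Module.annihilator A (A ⧸ m)) ∧
      ∀ Q : Set A, PrimeLike Q → (0 : A) ∈ Q → ∃ P ∈ F, (P : Set A) ⊆ Q := by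
  let C : Submodule A A → Prop := fun N => ∃ F : Set (Ideal A), F.Finite ∧
      (∀ P ∈ F, ∃ m : Ideal A, m.IsMaximal ∧ P = Module.annihilator A (A ⧸ m)) ∧
      ∀ Q : Set A, PrimeLike Q → (0 : A) ∈ Q → (∀ P ∈ F, ¬ (P : Set A) ⊆ Q) →
        ∃ a ∉ Q, ∀ n ∈ N, a * n = 0
  have hbot : C ⊥ := ⟨∅, Set.finite_empty, by simp, fun Q hQ _ _ => ⟨1, hQ.1, by simp⟩⟩
  obtain ⟨N, hN, hmax⟩ := (wellFounded_gt (α := Submodule A A)).has_min {N | C N} ⟨⊥, hbot⟩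
  have hNt : N = ⊤ := by
    by_contra hne
    obtain ⟨K, hK⟩ := exists_covBy_of_wellFoundedLT (α := Submodule A A) (a := N)
      (by rwa [isMax_iff_eq_top])
    have hs := (covBy_iff_quot_is_simple hK.le).1 hK
    obtain ⟨m, hm, ⟨e⟩⟩ := isSimpleModule_iff_quot_maximal.1 hs
    obtain ⟨F, hF, hF1, hF2⟩ := hN
    refine hmax K ⟨insert (Module.annihilator A (A ⧸ m)) F, hF.insert _, ?_, ?_⟩ hK.lt
    · intro P hP
      rcases hP with rfl | hP
      · exact ⟨m, hm, rfl⟩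
      · exact hF1 P hP
    · intro Q hQ hQ0 hall
      obtain ⟨a, ha, haN⟩ := hF2 Q hQ hQ0 (fun P hP => hall P (Set.mem_insert_of_mem _ hP))
      obtain ⟨p, hp, hpQ⟩ := Set.not_subset.1 (hall _ (Set.mem_insert _ _))
      have : ∃ x, a * x * p ∉ Q := by
        by_contra! hcon
        rcases hQ.2 a p hcon with h | h
        · exact ha h
        · exact hpQ h
      obtain ⟨x, hx⟩ := this
      refine ⟨_, hx, fun n hn => ?_⟩
      rw [mul_assoc, mul_assoc]
      apply haN
      apply N.smul_mem x
      rw [SetLike.mem_coe, ← LinearEquiv.annihilator_eq e, Module.mem_annihilator] at hp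
      have h1 := hp (Submodule.Quotient.mk ⟨n, hn⟩)
      rw [← Submodule.Quotient.mk_smul, Submodule.Quotient.mk_eq_zero] at h1
      exact h1
  subst hNt
  obtain ⟨F, hF, hF1, hF2⟩ := hN
  refine ⟨F, hF, hF1, fun Q hQ hQ0 => ?_⟩
  by_contra! hcon
  obtain ⟨a, ha, haN⟩ := hF2 Q hQ hQ0 hcon
  have := haN 1 trivial
  rw [mul_one] at this
  exact ha (this ▸ hQ0)

theorem kasch_of_baer [IsArtinianRing A] (hA : Module.Baer A A)
    (S : Type u) [AddCommGroup S] [Module A S] (hS : IsSimpleModule A S) :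
    ∃ I : Ideal A, Nonempty (S ≃ₗ[A] I) := by
  classical
  obtain ⟨F, hF, hF1, hF2⟩ := exists_finite_primitive A
  have simp_of : ∀ m : Ideal A, m.IsMaximal → IsSimpleModule A (A ⧸ m) := fun m hm =>
    isSimpleModule_iff_isCoatom.2 (Ideal.isMaximal_def.1 hm)
  -- every simple module has its annihilator in `F`
  have hmem : ∀ (T : Type u) [AddCommGroup T] [Module A T] [IsSimpleModule A T],
      Module.annihilator A T ∈ F := by
    intro T _ _ _
    obtain ⟨P, hP, hPle⟩ := hF2 _ (ann_prime (A := A) T) (Ideal.zero_mem _)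
    obtain ⟨m, hm, rfl⟩ := hF1 P hP
    have := simp_of m hm
    obtain ⟨e⟩ := iso_of_ann (A := A) (S := T) (S' := A ⧸ m) hPle
    rw [LinearEquiv.annihilator_eq e]
    exact hP
  choose! μ hμ hμ' using hF1
  have key : ∀ P ∈ F, ∃ P' ∈ F, (1 : A) ∉ LS A (A ⧸ μ P') ∧ LS A (A ⧸ μ P') = (P : Set A) := by
    intro P hP
    have hsP := simp_of _ (hμ P hP)
    have hprime : PrimeLike (P : Set A) := by
      have := ann_prime (A := A) (A ⧸ μ P)
      rwa [← hμ' P hP] at this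
    have h1 : ∃ P' ∈ F, LS A (A ⧸ μ P') ⊆ (P : Set A) := by
      by_contra! hcon
      have hfin : ∀ G : Finset (Ideal A), (G : Set (Ideal A)) ⊆ F →
          ∃ c : A, c ∉ P ∧ ∀ P' ∈ G, c ∈ LS A (A ⧸ μ P') := by
        intro G
        induction G using Finset.induction_on with
        | empty => intro _; exact ⟨1, hprime.1, by simp⟩
        | insert P' G hP' ih =>
          intro hG
          rw [Finset.coe_insert, Set.insert_subset_iff] at hG
          obtain ⟨c, hc, hcG⟩ := ih hG.2
          obtain ⟨d, hd, hdP⟩ := Set.not_subset.1 (hcon P' hG.1)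
          have : ∃ x, c * x * d ∉ P := by
            by_contra! hcon
            rcases hprime.2 c d hcon with h | h
            · exact hc h
            · exact hdP h
          obtain ⟨x, hx⟩ := this
          refine ⟨_, hx, fun P'' h => ?_⟩
          rcases Finset.mem_insert.1 h with rfl | h
          · exact LS_mul_left hd _
          · rw [mul_assoc]; exact LS_mul_right (hcG P'' h) _
      obtain ⟨c, hc, hcF⟩ := hfin hF.toFinset (by simp)
      apply hc
      rw [hμ' P hP]
      refine mem_ann_of_forall_LS c (fun T hT => ?_) _
      have hTF := hmem T
      have hs := simp_of _ (hμ _ hTF)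
      obtain ⟨e⟩ := iso_of_ann (A := A) (S := T) (S' := A ⧸ μ (Module.annihilator A T))
        (hμ' _ hTF).symm.le
      rw [LS_congr e]
      exact hcF _ (by simpa using hTF)
    obtain ⟨P', hP', hle⟩ := h1
    have hs' := simp_of _ (hμ P' hP')
    have hone : (1 : A) ∉ LS A (A ⧸ μ P') := fun h => hprime.1 (hle h)
    refine ⟨P', hP', hone, Set.Subset.antisymm hle ?_⟩
    obtain ⟨P2, hP2, h2⟩ := hF2 _ (LS_prime hA (A ⧸ μ P') hone) (by intro f s; simp)
    have hs2 := simp_of _ (hμ P2 hP2)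
    have h3 : P2 ≤ P := fun x hx => hle (h2 hx)
    obtain ⟨e⟩ := iso_of_ann (A := A) (S := A ⧸ μ P) (S' := A ⧸ μ P2)
      (by rw [← hμ' P hP, ← hμ' P2 hP2]; exact h3)
    have h4 := LinearEquiv.annihilator_eq e
    rw [← hμ' P hP, ← hμ' P2 hP2] at h4
    rw [h4]; exact h2
  choose! σ hσF hσ1 hσ using key
  have hinj : Set.InjOn σ F := by
    intro P hP P' hP' h
    have := hσ P hP
    rw [h, hσ P' hP'] at this
    exact SetLike.coe_injective this.symm
  have hsurj : Set.SurjOn σ F F := by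
    have := (Set.Finite.injOn_iff_bijOn_of_mapsTo hF (fun P hP => hσF P hP)).1 hinj
    exact this.surjOn
  have hSF := hmem S
  obtain ⟨P, hP, hPS⟩ := hsurj hSF
  have h1 := hσ1 P hP
  rw [hPS] at h1
  have hs := simp_of _ (hμ _ hSF)
  obtain ⟨e⟩ := iso_of_ann (A := A) (S := S) (S' := A ⧸ μ (Module.annihilator A S))
        (hμ' _ hSF).symm.le
  rw [← LS_congr e] at h1
  simp only [LS, Set.mem_ofPred_eq, not_forall, mul_one] at h1
  obtain ⟨f, s, hfs⟩ := h1
  have hf : f ≠ 0 := fun h => hfs (by rw [h]; rfl)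
  exact ⟨LinearMap.range f, ⟨LinearEquiv.ofInjective f (LinearMap.injective_of_ne_zero hf)⟩⟩

end kasch


section transfer
variable (R : Type u) [Ring R]

/-- `R` as a right module over itself is the regular module of `Rᵐᵒᵖ`. -/
def opE : R ≃ₗ[Rᵐᵒᵖ] Rᵐᵒᵖ where
  toFun := op
  invFun := unop
  left_inv _ := rfl
  right_inv _ := rfl
  map_add' _ _ := rfl
  map_smul' _ _ := rfl

theorem MI_of_isMininjective {N : Type v} [AddCommGroup N] [Module Rᵐᵒᵖ N]
    (h : IsMininjective R N) : MI Rᵐᵒᵖ N := by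
  intro I hI f
  let E := Submodule.equivMapOfInjective (opE R).symm.toLinearMap (opE R).symm.injective I
  have hs : IsSimpleModule Rᵐᵒᵖ (Submodule.map (opE R).symm.toLinearMap I) := IsSimpleModule.congr E.symm
  obtain ⟨g, hg⟩ := h _ (isSimpleModule_iff_isAtom.1 hs) (f ∘ₗ E.symm.toLinearMap)
  refine ⟨g ∘ₗ (opE R).symm.toLinearMap, fun x => ?_⟩
  have := hg (E x)
  simpa [E] using this

theorem isMininjective_of_equiv {N N' : Type*} [AddCommGroup N] [Module Rᵐᵒᵖ N]
    [AddCommGroup N'] [Module Rᵐᵒᵖ N'] (e : N ≃ₗ[Rᵐᵒᵖ] N')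
    (h : IsMininjective R N) : IsMininjective R N' := by
  intro I hI f
  obtain ⟨g, hg⟩ := h I hI (e.symm.toLinearMap ∘ₗ f)
  exact ⟨e.toLinearMap ∘ₗ g, fun x => by simp [hg]⟩

end transfer

end QF

/-- `R` is quasi-Frobenius iff `R` is right mininjective, right Artinian,
right strongly min-coherent and right Kasch. -/
theorem quasiFrobenius_iff_mininjective_artinian_minCoherent_kasch (R : Type u) [Ring R] :
    (IsArtinian Rᵐᵒᵖ R ∧ Module.Injective Rᵐᵒᵖ R) ↔
      (IsMininjective R R ∧ IsArtinian Rᵐᵒᵖ R ∧ RightStronglyMinCoherent R ∧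
        RightKasch.{u, u} R) := by
  constructor
  · rintro ⟨hart, hinj⟩
    have hartA : IsArtinianRing Rᵐᵒᵖ := (QF.opE R).isArtinian_iff.1 hart
    have hRb : Module.Baer Rᵐᵒᵖ R := Module.Baer.of_injective hinj
    have hA : Module.Baer Rᵐᵒᵖ Rᵐᵒᵖ := Module.Baer.of_equiv (QF.opE R) hRb
    refine ⟨?_, hart, ?_, ?_⟩
    · intro I _ f
      obtain ⟨g, hg⟩ := hRb.extension_property I.subtype Subtype.val_injective f
      exact ⟨g, fun x => LinearMap.congr_fun hg x⟩
    · intro I _ X _ _ p hp hker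
      exact QF.split_of_baer_ker p hp (QF.baer_of_MI hA
        (fun S _ _ hS => QF.kasch_of_baer hA S hS) _ (QF.MI_of_isMininjective R hker))
    · intro S _ _ hS
      obtain ⟨I, ⟨e⟩⟩ := QF.kasch_of_baer hA S hS
      exact ⟨Submodule.map (QF.opE R).symm.toLinearMap I,
        ⟨e.trans (Submodule.equivMapOfInjective _ (QF.opE R).symm.injective I)⟩⟩
  · rintro ⟨hmi, hart, hcoh, hK⟩
    have hartA : IsArtinianRing Rᵐᵒᵖ := (QF.opE R).isArtinian_iff.1 hart
    refine ⟨hart, Module.Baer.injective (QF.baer_of_split R ?_)⟩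
    intro S X _ _ _ _ p hS hp ⟨e⟩
    obtain ⟨I, ⟨ε⟩⟩ := hK S hS
    have hI : IsSimpleModule Rᵐᵒᵖ I := IsSimpleModule.congr ε.symm
    have hk : LinearMap.ker (ε.toLinearMap ∘ₗ p) = LinearMap.ker p :=
      LinearEquiv.ker_comp ε p
    obtain ⟨s, hs⟩ := hcoh I (isSimpleModule_iff_isAtom.1 hI) X (ε.toLinearMap ∘ₗ p)
      (ε.surjective.comp hp)
      (QF.isMininjective_of_equiv R (e.trans (LinearEquiv.ofEq _ _ hk.symm)) hmi)
    refine ⟨s ∘ₗ ε.toLinearMap, ?_⟩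
    ext x
    apply ε.injective
    exact LinearMap.congr_fun hs (ε x)
end

section
/- Let R be a commutative ring. Then every mininjective R-module is injective if and only if R is strongly min-coherent and Artinian. -/
universe u v w v'

section LeftDefs
variable (R : Type u) [Ring R]

/-- A (left) `R`-module `M` is mininjective if every homomorphism from a minimal (left)
ideal `I` of `R` into `M` extends to a homomorphism `R → M`. -/
def IsMininjectiveLeft (M : Type v) [AddCommGroup M] [Module R M] : Prop :=
  ∀ I : Submodule R R, IsAtom I → ∀ f : ↥I →ₗ[R] M,
    ∃ g : R →ₗ[R] M, ∀ x : ↥I, g ↑x = f x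

/-- A (left) `R`-module `M` is min-projective if every short exact sequence
`0 → N → X → M → 0` with `N` mininjective splits (equivalently `Ext¹(M, N) = 0` for
every mininjective `N`). -/
def IsMinProjectiveLeft (M : Type v) [AddCommGroup M] [Module R M] : Prop :=
  ∀ (X : Type (max u v)) [AddCommGroup X] [Module R X] (p : X →ₗ[R] M),
    Function.Surjective p → IsMininjectiveLeft R ↥(LinearMap.ker p) →
      ∃ s : M →ₗ[R] X, p ∘ₗ s = LinearMap.id

/-- `R` is strongly min-coherent if every minimal (left) ideal of `R` is min-projective. -/
def StronglyMinCoherentLeft : Prop :=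
  ∀ I : Submodule R R, IsAtom I → IsMinProjectiveLeft R ↥I

/-- `R` is a quasi V-ring if every simple `R`-module which is not isomorphic to
any ideal of `R` is injective. -/
def QuasiVRingLeft : Prop :=
  ∀ (S : Type v) [AddCommGroup S] [Module R S], IsSimpleModule R S →
    (¬ ∃ I : Submodule R R, Nonempty (S ≃ₗ[R] ↥I)) → Module.Injective R S

/-- `R` is a Kasch ring if every simple `R`-module is isomorphic to an ideal of `R`. -/
def KaschLeft : Prop :=
  ∀ (S : Type v) [AddCommGroup S] [Module R S], IsSimpleModule R S →
    ∃ I : Submodule R R, Nonempty (S ≃ₗ[R] ↥I)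

/-- An `R`-module `M` is almost injective if for every monomorphism `i : A → B` and every
`f : A → M`, either `f` extends to `B`, or there are a nonzero direct summand `D` of `B`
(with projection `π : B → D`) and `h : M → D` with `h ∘ f = π ∘ i`. -/
def IsAlmostInjectiveLeft (M : Type v) [AddCommGroup M] [Module R M] : Prop :=
  ∀ (A B : Type w) [AddCommGroup A] [AddCommGroup B] [Module R A] [Module R B]
    (i : A →ₗ[R] B), Function.Injective i → ∀ f : A →ₗ[R] M,
    (∃ g : B →ₗ[R] M, g ∘ₗ i = f) ∨
    (∃ D : Submodule R B, D ≠ ⊥ ∧ ∃ π : B →ₗ[R] ↥D,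
      π ∘ₗ D.subtype = LinearMap.id ∧ ∃ h : M →ₗ[R] ↥D, h ∘ₗ f = π ∘ₗ i)

/-- `R` is an almost V-ring if every simple `R`-module is almost injective. -/
def AlmostVRingLeft : Prop :=
  ∀ (S : Type v) [AddCommGroup S] [Module R S], IsSimpleModule R S →
    IsAlmostInjectiveLeft.{u, v, w} R S

end LeftDefs

theorem IsMininjectiveLeft.of_equiv' {R : Type u} [CommRing R] {M : Type v} {N : Type w}
    [AddCommGroup M] [Module R M] [AddCommGroup N] [Module R N] (e : M ≃ₗ[R] N)
    (h : IsMininjectiveLeft R M) : IsMininjectiveLeft R N := by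
  intro I hI f
  obtain ⟨g, hg⟩ := h I hI (e.symm.toLinearMap ∘ₗ f)
  exact ⟨e.toLinearMap ∘ₗ g, fun x => by simp [hg]⟩

theorem exists_gen_of_isAtom' {R : Type u} [CommRing R] {I : Submodule R R} (hI : IsAtom I)
    {a : R} (ha : a ∈ I) (h0 : a ≠ 0) {b : R} (hb : b ∈ I) : ∃ r, r * a = b := by
  have h : Submodule.span R {a} = I := by
    rcases hI.le_iff.1 ((Submodule.span_singleton_le_iff_mem a I).2 ha) with h | h
    · exact absurd (Submodule.span_singleton_eq_bot.1 h) h0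
    · exact h
  rw [← h] at hb
  simpa using Submodule.mem_span_singleton.1 hb

/-- An injective module splits off, so a surjection with injective kernel splits. -/
theorem split_of_injective_ker' {R : Type u} [CommRing R] {X M : Type u}
    [AddCommGroup X] [Module R X] [AddCommGroup M] [Module R M] (p : X →ₗ[R] M)
    (hp : Function.Surjective p) (h : Module.Injective R ↥(LinearMap.ker p)) :
    ∃ s : M →ₗ[R] X, p ∘ₗ s = LinearMap.id := by
  obtain ⟨r, hr⟩ := h.out (LinearMap.ker p).subtype (Submodule.injective_subtype _) LinearMap.id
  have hk : LinearMap.ker p ≤ LinearMap.ker (LinearMap.id - (LinearMap.ker p).subtype ∘ₗ r) := by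
    intro x hx
    have := hr ⟨x, hx⟩
    simp only [Submodule.subtype_apply, LinearMap.id_apply] at this
    simp [this]
  refine ⟨(Submodule.liftQ _ _ hk) ∘ₗ (p.quotKerEquivOfSurjective hp).symm.toLinearMap, ?_⟩
  ext m
  obtain ⟨x, rfl⟩ := hp m
  have : (p.quotKerEquivOfSurjective hp).symm (p x) = Submodule.Quotient.mk x := by
    rw [LinearEquiv.symm_apply_eq]; rfl
  have h2 : p (r x : X) = 0 := (r x).2
  simp [this, h2]

theorem exists_injective_embedding' {R : Type u} [CommRing R] (M : Type u)
    [AddCommGroup M] [Module R M] : ∃ (E : Type u) (_ : AddCommGroup E) (_ : Module R E)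
      (i : M →ₗ[R] E), Module.Injective R E ∧ Function.Injective i := by
  let J := CategoryTheory.Injective.under (ModuleCat.of R M)
  refine ⟨J, inferInstance, inferInstance, (CategoryTheory.Injective.ι (ModuleCat.of R M)).hom,
    (Module.injective_iff_injective_object R J).2
      (inferInstanceAs (CategoryTheory.Injective
        (CategoryTheory.Injective.under (ModuleCat.of R M)))), ?_⟩
  exact (ModuleCat.mono_iff_injective _).1 inferInstance

/-- Eventually zero sequences. -/
def evZero' (R : Type u) [CommRing R] (E : Type u) [AddCommGroup E] [Module R E] :
    Submodule R (ℕ → E) where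
  carrier := {s | ∃ N, ∀ n, N ≤ n → s n = 0}
  zero_mem' := ⟨0, fun _ _ => rfl⟩
  add_mem' := by
    rintro a b ⟨N, hN⟩ ⟨K, hK⟩
    refine ⟨max N K, fun n hn => ?_⟩
    simp [hN n (le_trans (le_max_left _ _) hn), hK n (le_trans (le_max_right _ _) hn)]
  smul_mem' := by
    rintro c a ⟨N, hN⟩
    exact ⟨N, fun n hn => by simp [hN n hn]⟩

theorem evZero_mininjective' {R : Type u} [CommRing R] (E : Type u) [AddCommGroup E] [Module R E]
    (hE : Module.Injective R E) : IsMininjectiveLeft R ↥(evZero' R E) := by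
  intro I hI f
  obtain ⟨a, ha, h0⟩ := I.exists_mem_ne_zero_of_ne_bot hI.1
  obtain ⟨N, hN⟩ := (f ⟨a, ha⟩).2
  have hx : ∀ n, ∃ g : R →ₗ[R] E, ∀ x : I, g x = (f x : ℕ → E) n := fun n =>
    hE.out I.subtype I.injective_subtype ((LinearMap.proj n : (ℕ → E) →ₗ[R] E) ∘ₗ (evZero' R E).subtype ∘ₗ f)
  choose g hg using hx
  let e : ℕ → E := fun n => if n < N then g n 1 else 0
  have he : e ∈ evZero' R E := ⟨N, fun n hn => by simp [e, Nat.not_lt.2 hn]⟩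
  refine ⟨LinearMap.toSpanSingleton R _ ⟨e, he⟩, ?_⟩
  have key : a • (⟨e, he⟩ : evZero' R E) = f ⟨a, ha⟩ := by
    ext n
    by_cases hn : n < N
    · have := hg n ⟨a, ha⟩
      simp only [Submodule.coe_smul, Pi.smul_apply, e, hn, if_true]
      rw [← map_smul, ← this]; simp
    · have h1 := hN n (Nat.not_lt.1 hn)
      simp only [Submodule.coe_smul, Pi.smul_apply, e, hn, if_false, smul_zero]
      exact h1.symm
  rintro ⟨x, hx⟩
  obtain ⟨r, rfl⟩ := exists_gen_of_isAtom' hI ha h0 hx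
  have : (⟨r * a, hx⟩ : I) = r • ⟨a, ha⟩ := rfl
  rw [this, map_smul, ← key]
  simp [mul_smul]

theorem noetherian_of_mininjective_injective' {R : Type u} [CommRing R]
    (H : ∀ (M : Type u) [AddCommGroup M] [Module R M],
        IsMininjectiveLeft R M → Module.Injective R M) : IsNoetherianRing R := by
  rw [isNoetherianRing_iff, ← monotone_stabilizes_iff_noetherian]
  intro c
  obtain ⟨E, _, _, i, hE, hi⟩ := exists_injective_embedding' (R := R) (∀ n, R ⧸ (c n : Ideal R))
  have hinj := H _ (evZero_mininjective' (R := R) E hE)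
  let e : ∀ n, R →ₗ[R] E := fun n =>
    i ∘ₗ LinearMap.single R (fun n => R ⧸ (c n : Ideal R)) n ∘ₗ (c n).mkQ
  have he : ∀ n x, e n x = 0 ↔ x ∈ c n := by
    intro n x
    simp only [e, LinearMap.comp_apply]
    rw [map_eq_zero_iff i hi]
    simp [Ideal.Quotient.eq_zero_iff_mem]
  let I : Submodule R R := ⨆ n, c n
  let F : I →ₗ[R] evZero' R E := LinearMap.codRestrict _ (LinearMap.pi e ∘ₗ I.subtype) (by
    rintro ⟨x, hx⟩
    obtain ⟨k, hk⟩ := (Submodule.mem_iSup_of_chain c x).1 hx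
    exact ⟨k, fun n hn => (he n x).2 (c.monotone hn hk)⟩)
  obtain ⟨g, hg⟩ := hinj.out I.subtype I.injective_subtype F
  obtain ⟨N, hN⟩ := (g 1).2
  refine ⟨N, fun m hm => le_antisymm (c.monotone hm) fun x hx => ?_⟩
  have hxI : x ∈ I := (Submodule.mem_iSup_of_chain c x).2 ⟨m, hx⟩
  rw [← he]
  have h1 : (F ⟨x, hxI⟩ : ℕ → E) N = e N x := rfl
  rw [← h1, ← hg]
  have h2 : g x = x • g 1 := by rw [← map_smul]; simp
  simp only [Submodule.subtype_apply, h2, Submodule.coe_smul, Pi.smul_apply, hN N le_rfl, smul_zero]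

theorem maximal_of_mininjective_injective' {R : Type u} [CommRing R]
    (H : ∀ (M : Type u) [AddCommGroup M] [Module R M],
        IsMininjectiveLeft R M → Module.Injective R M) (p : Ideal R) (hp : p.IsPrime) :
    p.IsMaximal := by
  by_contra hmax
  have hex : ∃ a, a ∉ p ∧ ∀ r, 1 - r * a ∉ p := by
    by_contra! hcon
    refine hmax (Ideal.isMaximal_iff.2 ⟨fun h => hp.ne_top ((Ideal.eq_top_iff_one _).2 h), ?_⟩)
    intro J x hJ hx hxJ
    obtain ⟨r, hr⟩ := hcon x hx
    have := J.add_mem (hJ hr) (J.mul_mem_left r hxJ)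
    simpa using this
  obtain ⟨a, ha, hr⟩ := hex
  have hmin : IsMininjectiveLeft R (R ⧸ p) := by
    intro I hI f
    refine ⟨0, fun b => ?_⟩
    by_contra hne
    have hfb : f b ≠ 0 := fun h => hne (by simp [h])
    have hmk : ∀ (r : R) (y : R ⧸ p), r • y = 0 → y ≠ 0 → r ∈ p := by
      intro r y h hy
      obtain ⟨z, rfl⟩ := Ideal.Quotient.mk_surjective y
      have h' : Ideal.Quotient.mk p (r * z) = 0 := h
      rw [Ideal.Quotient.eq_zero_iff_mem] at h'
      exact (hp.mem_or_mem h').resolve_right fun hz => hy (Ideal.Quotient.eq_zero_iff_mem.2 hz)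
    have hab : a * (b : R) ≠ 0 := by
      intro h
      have h3 : a • b = 0 := Subtype.ext h
      exact ha (hmk a (f b) (by rw [← map_smul, h3, map_zero]) hfb)
    obtain ⟨r, h4⟩ := exists_gen_of_isAtom' hI (I.smul_mem a b.2) hab b.2
    refine hr r (hmk _ (f b) ?_ hfb)
    rw [← map_smul]
    have : (1 - r * a) • b = 0 := by
      apply Subtype.ext
      change (1 - r * a) * (b : R) = 0
      have h5 : r * (a * (b : R)) = b := h4
      linear_combination -h5
    rw [this, map_zero]
  obtain ⟨h, hh⟩ := (H _ hmin).out (LinearMap.lsmul R (R ⧸ p) a) (by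
    rw [← LinearMap.ker_eq_bot, LinearMap.ker_eq_bot']
    intro y hy
    obtain ⟨z, rfl⟩ := Ideal.Quotient.mk_surjective y
    have h' : Ideal.Quotient.mk p (a * z) = 0 := hy
    rw [Ideal.Quotient.eq_zero_iff_mem] at h'
    exact Ideal.Quotient.eq_zero_iff_mem.2 ((hp.mem_or_mem h').resolve_left ha)) LinearMap.id
  have h1 := hh 1
  simp only [LinearMap.lsmul_apply, map_smul, LinearMap.id_apply] at h1
  obtain ⟨r, hr'⟩ := Ideal.Quotient.mk_surjective (h 1)
  rw [← hr'] at h1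
  have h6 : Ideal.Quotient.mk p (a * r) = Ideal.Quotient.mk p 1 := h1
  apply hr r
  rw [← Ideal.Quotient.eq_zero_iff_mem, map_sub, mul_comm r a, h6, sub_self]

/-- `Ext¹(R/m, N) = 0` in concrete terms. -/
theorem extend_of_minCoherent' {R : Type u} [CommRing R] (hR : StronglyMinCoherentLeft R)
    {N : Type u} [AddCommGroup N] [Module R N] (hN : IsMininjectiveLeft R N)
    (m : Ideal R) (hm : m.IsMaximal) (x : R) (hx : ∀ r, r ∈ m ↔ r * x = 0)
    (φ : m →ₗ[R] N) : ∃ n : N, ∀ a : m, φ a = (a : R) • n := by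
  have hx0 : x ≠ 0 := by
    rintro rfl
    exact hm.ne_top ((Ideal.eq_top_iff_one _).2 ((hx 1).2 (by simp)))
  let I : Submodule R R := Submodule.span R {x}
  have hxI : x ∈ I := Submodule.mem_span_singleton_self x
  have hI : IsAtom I := by
    refine ⟨fun h => hx0 (Submodule.span_singleton_eq_bot.1 h), fun K hK => ?_⟩
    by_contra hK0
    obtain ⟨b, hb, hb0⟩ := K.exists_mem_ne_zero_of_ne_bot hK0
    obtain ⟨r, rfl⟩ := Submodule.mem_span_singleton.1 (hK.le hb)
    have hr : r ∉ m := fun h => hb0 ((hx r).1 h)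
    obtain ⟨s, hs⟩ := hm.exists_inv hr
    apply hK.not_ge
    rw [Submodule.span_singleton_le_iff_mem]
    obtain ⟨t, ht, hst⟩ := hs
    have h1 := (hx t).1 ht
    have : x = s • (r • x) := by
      simp only [smul_eq_mul]; linear_combination h1 - x * hst
    rw [this]
    exact K.smul_mem s hb
  let D : Submodule R (N × R) := LinearMap.range (φ.prod (-(Submodule.subtype m)))
  let q : (N × R) →ₗ[R] I :=
    LinearMap.toSpanSingleton R I ⟨x, hxI⟩ ∘ₗ LinearMap.snd R N R
  have hq : ∀ n r, ((q (n, r) : I) : R) = r * x := fun n r => rfl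
  have hDq : D ≤ LinearMap.ker q := by
    rintro _ ⟨a, rfl⟩
    rw [LinearMap.mem_ker]
    apply Subtype.ext
    have := (hx a).1 a.2
    change (-(a : R)) * x = 0
    linear_combination -this
  let p : ((N × R) ⧸ D) →ₗ[R] I := D.liftQ q hDq
  have hp : Function.Surjective p := by
    rintro ⟨y, hy⟩
    obtain ⟨r, rfl⟩ := Submodule.mem_span_singleton.1 hy
    exact ⟨D.mkQ (0, r), rfl⟩
  let j : N →ₗ[R] ((N × R) ⧸ D) := D.mkQ ∘ₗ LinearMap.inl R N R
  have hj : Function.Injective j := by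
    rw [← LinearMap.ker_eq_bot, LinearMap.ker_eq_bot']
    intro n hn
    obtain ⟨a, ha⟩ := (Submodule.Quotient.mk_eq_zero D).1 hn
    have h1 : φ a = n := congrArg Prod.fst ha
    have h2 : -(a : R) = 0 := congrArg Prod.snd ha
    have h3 : a = 0 := Subtype.ext (neg_eq_zero.1 h2)
    rw [← h1, h3, map_zero]
  have hrange : LinearMap.range j = LinearMap.ker p := by
    apply le_antisymm
    · rintro _ ⟨n, rfl⟩
      rw [LinearMap.mem_ker]
      apply Subtype.ext
      change (0 : R) * x = 0
      simp
    · intro y hy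
      obtain ⟨⟨n, r⟩, rfl⟩ := D.mkQ_surjective y
      have h1 : r * x = 0 := congrArg Subtype.val hy
      have hr := (hx r).2 h1
      refine ⟨n + φ ⟨r, hr⟩, ?_⟩
      apply (Submodule.Quotient.eq D).2
      refine ⟨⟨r, hr⟩, ?_⟩
      ext <;> simp
  have hker : IsMininjectiveLeft R (LinearMap.ker p) :=
    hN.of_equiv' ((LinearEquiv.ofInjective j hj).trans (LinearEquiv.ofEq _ _ hrange))
  obtain ⟨s, hs⟩ := hR I hI _ p hp hker
  obtain ⟨⟨n₀, r₀⟩, h0⟩ := D.mkQ_surjective (s ⟨x, hxI⟩)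
  have h1 : r₀ * x = x := by
    have := congrArg Subtype.val (LinearMap.congr_fun hs ⟨x, hxI⟩)
    simp only [LinearMap.comp_apply, ← h0] at this
    exact this
  have hr : 1 - r₀ ∈ m := (hx _).2 (by linear_combination -h1)
  refine ⟨φ ⟨1 - r₀, hr⟩ - n₀, fun a => ?_⟩
  have h2 : s ((a : R) • ⟨x, hxI⟩) = 0 := by
    have : (a : R) • (⟨x, hxI⟩ : I) = 0 := Subtype.ext ((hx a).1 a.2)
    rw [this, map_zero]
  rw [map_smul, ← h0, ← map_smul] at h2
  obtain ⟨b, hb⟩ := (Submodule.Quotient.mk_eq_zero D).1 h2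
  have h3 : φ b = (a : R) • n₀ := congrArg Prod.fst hb
  have h4 : -(b : R) = a * r₀ := congrArg Prod.snd hb
  have h5 : a = (a : R) • (⟨1 - r₀, hr⟩ : m) - b := by
    apply Subtype.ext
    change (a : R) = a * (1 - r₀) - b
    linear_combination -h4
  rw [smul_sub, ← h3, ← map_smul, ← map_sub, ← h5]

theorem exists_colon' {R : Type u} [CommRing R] [IsArtinianRing R] (J m : Ideal R)
    (hm : m.IsMaximal) (h : J ≤ m) : ∃ k : R, ∀ r, r ∈ m ↔ r * k ∈ J := by
  have hmin : m ∈ (Submodule.colon J {(1 : R)}).minimalPrimes := by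
    have : Submodule.colon J {(1 : R)} = J := by
      ext r; simp [Submodule.mem_colon_singleton]
    rw [this]
    refine ⟨⟨hm.isPrime, h⟩, fun q hq hqm => ?_⟩
    have := hq.1
    exact ((Ideal.isMaximal_of_isPrime q).eq_of_le hm.ne_top hqm).ge
  obtain ⟨k, hk⟩ := Submodule.exists_eq_colon_of_mem_minimalPrimes hmin
  refine ⟨k, fun r => ?_⟩
  rw [hk, Submodule.mem_colon_singleton, smul_eq_mul]

theorem baer_of_minCoherent' {R : Type u} [CommRing R] [IsArtinianRing R]
    (hR : StronglyMinCoherentLeft R)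
    {N : Type u} [AddCommGroup N] [Module R N] (hN : IsMininjectiveLeft R N) :
    Module.Baer R N := by
  intro J
  induction J using WellFoundedGT.induction with
  | ind J ih =>
  intro f
  by_cases hJ : J = ⊤
  · subst hJ
    exact ⟨f ∘ₗ Submodule.topEquiv.symm.toLinearMap, fun x _ => rfl⟩
  obtain ⟨m, hm, hJm⟩ := Ideal.exists_le_maximal J hJ
  obtain ⟨k, hk⟩ := exists_colon' J m hm hJm
  obtain ⟨x, hx⟩ := exists_colon' ⊥ m hm bot_le
  have hkJ : k ∉ J := fun h =>
    hm.ne_top ((Ideal.eq_top_iff_one _).2 ((hk 1).2 (by simpa using h)))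
  let φ : m →ₗ[R] N := f ∘ₗ LinearMap.codRestrict J
    (LinearMap.toSpanSingleton R R k ∘ₗ Submodule.subtype m) (fun a => (hk a).1 a.2)
  obtain ⟨n, hn⟩ := extend_of_minCoherent' hR hN m hm x (by simpa using hx) φ
  have hn' : ∀ (c : R) (hc : c * k ∈ J), f ⟨c * k, hc⟩ = c • n := fun c hc => hn ⟨c, (hk c).2 hc⟩
  let F : R →ₗ.[R] N := ⟨J, f⟩
  let G : R →ₗ.[R] N := LinearPMap.mkSpanSingleton' k n (by
    intro c hc
    have hc' : c * k = 0 := hc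
    have := hn' c (by rw [hc']; exact J.zero_mem)
    rw [RingHom.id_apply, ← this]
    have h0 : (⟨c * k, by rw [hc']; exact J.zero_mem⟩ : J) = 0 := Subtype.ext hc'
    rw [h0, map_zero])
  have hFG : ∀ (x : F.domain) (y : G.domain), (x : R) = y → F x = G y := by
    rintro ⟨x, hx⟩ ⟨y, hy⟩ hxy
    obtain ⟨c, rfl⟩ := Submodule.mem_span_singleton.1 hy
    obtain rfl : x = c • k := hxy
    rw [LinearPMap.mkSpanSingleton'_apply]
    exact hn' c hx
  have hlt : J < J ⊔ Submodule.span R {k} := by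
    refine lt_of_le_of_ne le_sup_left fun h => hkJ ?_
    rw [h]
    exact Submodule.mem_sup_right (Submodule.mem_span_singleton_self k)
  obtain ⟨g, hg⟩ := ih _ hlt (F.sup G hFG).toFun
  refine ⟨g, fun y hy => ?_⟩
  rw [hg y (hlt.le hy)]
  exact ((F.left_le_sup G hFG).2 (x := ⟨y, hy⟩) (y := ⟨y, hlt.le hy⟩) rfl).symm

/-- For a commutative ring `R`, every mininjective `R`-module is injective
iff `R` is strongly min-coherent and Artinian. -/
theorem comm_mininjective_injective_iff (R : Type u) [CommRing R] :
    (∀ (M : Type u) [AddCommGroup M] [Module R M],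
        IsMininjectiveLeft R M → Module.Injective R M) ↔
      (StronglyMinCoherentLeft R ∧ IsArtinianRing R) := by
  constructor
  · intro H
    refine ⟨fun I _ X _ _ p hp hk => split_of_injective_ker' p hp (H _ hk), ?_⟩
    rw [isArtinianRing_iff_isNoetherianRing_krullDimLE_zero]
    exact ⟨noetherian_of_mininjective_injective' H,
      Ring.KrullDimLE.mk₀ fun p hp => maximal_of_mininjective_injective' H p hp⟩
  · rintro ⟨hR, hA⟩ M _ _ hM
    exact (baer_of_minCoherent' hR hM).injective
end

section
/- Let k be a field, let n ≥ 2, and let R = UT_n(k) be the ring of n × n upper triangular matrices over k. The following statements are equivalent: (1) R is a right almost V-ring; (2) every mininjective right R-module is injective; (3) n = 2. -/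
universe u v w v'

open MulOpposite

open Matrix in
/-- The ring of `n × n` upper triangular matrices over `k`, as a subring of the matrix
ring. -/
def upperTriangularRing (n : ℕ) (k : Type u) [Field k] :
    Subring (Matrix (Fin n) (Fin n) k) where
  carrier := {M | M.BlockTriangular (id : Fin n → Fin n)}
  zero_mem' := blockTriangular_zero
  one_mem' := blockTriangular_one
  add_mem' := fun ha hb => ha.add hb
  neg_mem' := fun ha => ha.neg
  mul_mem' := fun ha hb => ha.mul hb


section Helpers

theorem exists_ext_aux {K A B S : Type*} [Field K] [AddCommGroup A] [AddCommGroup B]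
    [AddCommGroup S] [Module K A] [Module K B] [Module K S] (j : A →ₗ[K] B) (N : Submodule K B)
    (f : A →ₗ[K] S) (h : ∀ a, j a ∈ N → f a = 0) :
    ∃ φ : B →ₗ[K] S, (∀ a, φ (j a) = f a) ∧ ∀ y ∈ N, φ y = 0 := by
  let q : A →ₗ[K] B ⧸ N := N.mkQ ∘ₗ j
  have hq : ∀ a, q a = 0 → f a = 0 := by
    intro a ha
    apply h
    simpa [q] using ha
  let q' : (A ⧸ LinearMap.ker q) →ₗ[K] B ⧸ N := (LinearMap.ker q).liftQ q le_rfl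
  have hq' : LinearMap.ker q' = ⊥ := Submodule.ker_liftQ_eq_bot _ _ _ le_rfl
  obtain ⟨t, ht⟩ := q'.exists_leftInverse_of_injective hq'
  let f' : (A ⧸ LinearMap.ker q) →ₗ[K] S := (LinearMap.ker q).liftQ f (fun a ha => hq a ha)
  refine ⟨f' ∘ₗ t ∘ₗ N.mkQ, fun a => ?_, fun y hy => ?_⟩
  · have h1 : t (q' (Submodule.Quotient.mk a)) = Submodule.Quotient.mk a :=
      LinearMap.congr_fun ht _
    have h2 : q' (Submodule.Quotient.mk a) = N.mkQ (j a) := rfl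
    rw [h2] at h1
    simp only [LinearMap.comp_apply, h1]
    rfl
  · have : N.mkQ y = 0 := by simpa using hy
    simp [LinearMap.comp_apply, this]

theorem injective_of_right_baer {R : Type u} [Ring R] {M : Type u} [AddCommGroup M]
    [Module Rᵐᵒᵖ M]
    (h : ∀ (I : Submodule Rᵐᵒᵖ R) (f : ↥I →ₗ[Rᵐᵒᵖ] M), ∃ m : M, ∀ x : ↥I, f x = op (x : R) • m) :
    Module.Injective Rᵐᵒᵖ M := by
  apply Module.Baer.injective
  intro I f
  let J : Submodule Rᵐᵒᵖ R :=
    { carrier := {r | op r ∈ I}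
      zero_mem' := I.zero_mem
      add_mem' := fun ha hb => I.add_mem ha hb
      smul_mem' := fun c x hx => I.mul_mem_left c hx }
  let g : ↥J →ₗ[Rᵐᵒᵖ] M :=
    { toFun := fun x => f ⟨op (x : R), x.2⟩
      map_add' := fun x y => f.map_add ⟨op (x : R), x.2⟩ ⟨op (y : R), y.2⟩
      map_smul' := fun c x => f.map_smul c ⟨op (x : R), x.2⟩ }
  obtain ⟨m, hm⟩ := h J g
  refine ⟨LinearMap.toSpanSingleton Rᵐᵒᵖ M m, fun x hx => ?_⟩
  exact (hm ⟨unop x, hx⟩).symm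

variable {k : Type u} [Field k]

/-- matrix unit times a scalar -/
def utE {n : ℕ} (i j : Fin n) (h : i ≤ j) (c : k) : ↥(upperTriangularRing n k) :=
  ⟨Matrix.single i j c, by
    intro a b hab
    rw [Matrix.single_apply, if_neg]
    rintro ⟨rfl, rfl⟩
    exact absurd hab (not_lt.mpr h)⟩

theorem ut_zero {n : ℕ} (x : ↥(upperTriangularRing n k)) {i j : Fin n} (h : j < i) :
    x.1 i j = 0 := x.2 h

theorem ut_mul_diag {n : ℕ} (x y : ↥(upperTriangularRing n k)) (i : Fin n) :
    (x * y).1 i i = x.1 i i * y.1 i i := by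
  change (x.1 * y.1) i i = _
  rw [Matrix.mul_apply]
  apply Finset.sum_eq_single i
  · intro l _ hl
    rcases lt_or_gt_of_ne hl with h | h
    · rw [ut_zero x h, zero_mul]
    · rw [ut_zero y h, mul_zero]
  · simp

theorem utE_mul_apply {n : ℕ} (x : ↥(upperTriangularRing n k)) (i j : Fin n) (h : i ≤ j) (c : k)
    (a b : Fin n) : (x * utE i j h c).1 a b = if b = j then x.1 a i * c else 0 := by
  change (x.1 * Matrix.single i j c) a b = _
  split_ifs with hb
  · subst hb; simp
  · rw [Matrix.mul_single_apply_of_ne]; exact hb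

/-- the matrices supported in the last column -/
def lastCol (m : ℕ) (k : Type u) [Field k] :
    Submodule (↥(upperTriangularRing (m + 1) k))ᵐᵒᵖ ↥(upperTriangularRing (m + 1) k) where
  carrier := {x | ∀ i j, j ≠ Fin.last m → x.1 i j = 0}
  zero_mem' := fun _ _ _ => rfl
  add_mem' := fun {x y} hx hy i j hj => by
    change x.1 i j + y.1 i j = 0
    rw [hx i j hj, hy i j hj, add_zero]
  smul_mem' := fun c x hx i j hj => by
    change (x.1 * (unop c).1) i j = 0
    rw [Matrix.mul_apply]
    apply Finset.sum_eq_zero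
    intro l _
    by_cases hl : l = Fin.last m
    · subst hl
      rw [ut_zero (unop c) (lt_of_le_of_ne (Fin.le_last j) hj), mul_zero]
    · rw [hx i l hl, zero_mul]

theorem atom_le_lastCol {m : ℕ}
    {I : Submodule (↥(upperTriangularRing (m + 1) k))ᵐᵒᵖ ↥(upperTriangularRing (m + 1) k)}
    (hI : IsAtom I) : I ≤ lastCol m k := by
  by_contra hle
  have hbot : I ⊓ lastCol m k = ⊥ := hI.2 _ (lt_of_le_of_ne inf_le_left (by
    intro h; exact hle (inf_eq_left.mp h)))
  apply hI.1
  rw [Submodule.eq_bot_iff]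
  intro x hx
  apply Subtype.ext
  ext i j
  have hmem : x * utE j (Fin.last m) (Fin.le_last j) 1 ∈ I ⊓ lastCol m k := by
    refine ⟨I.smul_mem (op _) hx, ?_⟩
    intro a b hb
    rw [utE_mul_apply, if_neg hb]
  rw [hbot, Submodule.mem_bot] at hmem
  have := utE_mul_apply x j (Fin.last m) (Fin.le_last j) 1 i (Fin.last m)
  rw [hmem] at this
  simpa using this.symm

/-- the character of the simple module -/
def utChi {n : ℕ} (i : Fin n) : (↥(upperTriangularRing n k))ᵐᵒᵖ →+* k where
  toFun x := (unop x).1 i i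
  map_one' := Matrix.one_apply_eq i
  map_zero' := rfl
  map_add' _ _ := rfl
  map_mul' x y := by
    change (unop y * unop x).1 i i = _
    rw [ut_mul_diag, mul_comm]

/-- The simple module at vertex `1`. -/
def SOne (_m : ℕ) (k : Type u) [Field k] : Type u := k

instance (m : ℕ) : AddCommGroup (SOne m k) := inferInstanceAs (AddCommGroup k)
instance (m : ℕ) : Module (↥(upperTriangularRing (m + 3) k))ᵐᵒᵖ (SOne m k) :=
  Module.compHom k (utChi (k := k) (1 : Fin (m + 3)))

theorem SOne_smul (m : ℕ) (x : (↥(upperTriangularRing (m + 3) k))ᵐᵒᵖ) (s : SOne m k) :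
    x • s = ((unop x).1 1 1 * (show k from s) : k) := rfl

theorem SOne_simple (m : ℕ) :
    IsSimpleModule (↥(upperTriangularRing (m + 3) k))ᵐᵒᵖ (SOne m k) := by
  rw [isSimpleModule_iff_toSpanSingleton_surjective]
  refine ⟨inferInstanceAs (Nontrivial k), fun x hx y => ?_⟩
  refine ⟨op (utE 1 1 le_rfl ((show k from y) * (show k from x)⁻¹)), ?_⟩
  rw [LinearMap.toSpanSingleton_apply, SOne_smul]
  change (Matrix.single 1 1 ((show k from y) * (show k from x)⁻¹) : Matrix _ _ k) 1 1 * _ = _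
  rw [Matrix.single_apply_same]
  exact inv_mul_cancel_right₀ (show (show k from x) ≠ 0 from hx) _

theorem SOne_mininj (m : ℕ) : IsMininjective (↥(upperTriangularRing (m + 3) k)) (SOne m k) := by
  intro I hI f
  refine ⟨0, fun x => ?_⟩
  have hx := atom_le_lastCol hI x.2
  let e : ↥(upperTriangularRing (m + 3) k) := utE (Fin.last (m + 2)) (Fin.last (m + 2)) le_rfl 1
  have h1 : op e • x = x := by
    apply Subtype.ext
    apply Subtype.ext
    ext a b
    change ((x : ↥(upperTriangularRing (m + 3) k)) * e).1 a b = _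
    rw [utE_mul_apply]
    split_ifs with h
    · rw [h, mul_one]
    · exact (hx a b h).symm
  have h2 : f x = op e • f x := by rw [← f.map_smul, h1]
  rw [LinearMap.zero_apply, h2, SOne_smul]
  have h3 : e.1 1 1 = 0 := by
    change (Matrix.single _ _ _ : Matrix _ _ k) 1 1 = 0
    rw [Matrix.single_apply, if_neg]
    rintro ⟨h, -⟩
    have := congrArg Fin.val h
    simp at this
  change (0 : k) = e.1 1 1 * _
  rw [h3, zero_mul]

/-- first-row matrices -/
def rowZero (m : ℕ) (k : Type u) [Field k] :
    Submodule (↥(upperTriangularRing (m + 3) k))ᵐᵒᵖ ↥(upperTriangularRing (m + 3) k) where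
  carrier := {x | ∀ i j, i ≠ 0 → x.1 i j = 0}
  zero_mem' := fun _ _ _ => rfl
  add_mem' := fun {x y} hx hy i j hj => by
    change x.1 i j + y.1 i j = 0
    rw [hx i j hj, hy i j hj, add_zero]
  smul_mem' := fun c x hx i j hj => by
    change (x.1 * (unop c).1) i j = 0
    rw [Matrix.mul_apply]
    exact Finset.sum_eq_zero fun l _ => by rw [hx i l hj, zero_mul]

/-- first-row matrices with zero corner entry -/
def rowZero' (m : ℕ) (k : Type u) [Field k] :
    Submodule (↥(upperTriangularRing (m + 3) k))ᵐᵒᵖ ↥(upperTriangularRing (m + 3) k) where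
  carrier := {x | x ∈ rowZero m k ∧ x.1 0 0 = 0}
  zero_mem' := ⟨Submodule.zero_mem _, rfl⟩
  add_mem' := fun {x y} hx hy => ⟨Submodule.add_mem _ hx.1 hy.1, by
    change x.1 0 0 + y.1 0 0 = 0
    rw [hx.2, hy.2, add_zero]⟩
  smul_mem' := fun c x hx => ⟨Submodule.smul_mem _ c hx.1, by
    change (x * unop c).1 0 0 = 0
    rw [ut_mul_diag, hx.2, zero_mul]⟩

theorem rowZero'_le (m : ℕ) : rowZero' m k ≤ rowZero m k := fun _ h => h.1

/-- The map picking the `(0,1)` entry. -/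
def topMap (m : ℕ) (k : Type u) [Field k] :
    ↥(rowZero' m k) →ₗ[(↥(upperTriangularRing (m + 3) k))ᵐᵒᵖ] SOne m k where
  toFun x := (x.1.1 0 1 : k)
  map_add' _ _ := rfl
  map_smul' c x := by
    change (x.1.1 * (unop c).1) 0 1 = (unop c).1 1 1 * x.1.1 0 1
    rw [Matrix.mul_apply, Finset.sum_eq_single 1]
    · exact mul_comm _ _
    · intro l _ hl
      by_cases h0 : l = 0
      · rw [h0, x.2.2, zero_mul]
      · rw [ut_zero (unop c), mul_zero]
        exact lt_of_le_of_ne (Fin.one_le_of_ne_zero h0) hl.symm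
    · simp

theorem utE_mem_rowZero (m : ℕ) (j : Fin (m + 3)) (c : k) :
    utE 0 j (Fin.zero_le j) c ∈ rowZero m k := by
  intro a b ha
  exact Matrix.single_apply_of_row_ne ha.symm _ _ _

theorem utE_mem_rowZero' (m : ℕ) (j : Fin (m + 3)) (hj : j ≠ 0) (c : k) :
    utE 0 j (Fin.zero_le j) c ∈ rowZero' m k :=
  ⟨utE_mem_rowZero m j c, Matrix.single_apply_of_col_ne _ _ hj _⟩

theorem topMap_not_ext (m : ℕ)
    (g : ↥(rowZero m k) →ₗ[(↥(upperTriangularRing (m + 3) k))ᵐᵒᵖ] SOne m k)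
    (hg : ∀ x, g (Submodule.inclusion (rowZero'_le m) x) = topMap m k x) : False := by
  have h01 : (1 : Fin (m + 3)) ≠ 0 := by simp
  let x : ↥(rowZero' m k) := ⟨utE 0 1 (Fin.zero_le _) 1, utE_mem_rowZero' m 1 h01 1⟩
  let y : ↥(rowZero m k) := ⟨utE 0 0 (Fin.zero_le _) 1, utE_mem_rowZero m 0 1⟩
  have h1 : Submodule.inclusion (rowZero'_le m) x =
      op (utE 0 1 (Fin.zero_le _) (1 : k) : ↥(upperTriangularRing (m + 3) k)) • y := by
    apply Subtype.ext
    apply Subtype.ext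
    change Matrix.single 0 1 (1 : k) = Matrix.single 0 0 (1 : k) * Matrix.single 0 1 (1 : k)
    simp
  have h2 := hg x
  rw [h1, g.map_smul, SOne_smul] at h2
  have h3 : (Matrix.single 0 1 (1 : k) : Matrix (Fin (m + 3)) (Fin (m + 3)) k) 1 1 *
    (show k from g y) = (Matrix.single 0 1 (1 : k) : Matrix (Fin (m + 3)) (Fin (m + 3)) k) 0 1 := h2
  rw [Matrix.single_apply_same, Matrix.single_apply_of_row_ne h01.symm, zero_mul] at h3
  exact zero_ne_one h3

theorem SOne_not_inj (m : ℕ) :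
    ¬ Module.Injective (↥(upperTriangularRing (m + 3) k))ᵐᵒᵖ (SOne m k) := by
  intro h
  obtain ⟨g, hg⟩ := h.out (Submodule.inclusion (rowZero'_le m))
    (Submodule.inclusion_injective _) (topMap m k)
  exact topMap_not_ext m g hg

theorem SOne_not_almost (m : ℕ) :
    ¬ IsAlmostInjective.{u, u, u} (↥(upperTriangularRing (m + 3) k)) (SOne m k) := by
  intro h
  rcases h _ _ (Submodule.inclusion (rowZero'_le m))
    (Submodule.inclusion_injective _) (topMap m k) with ⟨g, hg⟩ | ⟨D, hD, π, hπ, t, ht⟩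
  · exact topMap_not_ext m g (fun x => LinearMap.congr_fun hg x)
  · obtain ⟨d, hd, hd0⟩ := (Submodule.ne_bot_iff D).mp hD
    have hl : (Fin.last (m + 2)) ≠ (0 : Fin (m + 3)) := by simp
    have hl1 : (Fin.last (m + 2)) ≠ (1 : Fin (m + 3)) := by
      intro h
      have := congrArg Fin.val h
      simp at this
    have hex : ∃ j, d.1.1 0 j ≠ 0 := by
      by_contra hcon
      push Not at hcon
      apply hd0
      apply Subtype.ext
      apply Subtype.ext
      ext a b
      by_cases ha : a = 0
      · rw [ha, hcon b]; rfl
      · exact d.2 a b ha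
    obtain ⟨j, hj⟩ := hex
    let x : ↥(rowZero' m k) := ⟨utE 0 (Fin.last _) (Fin.zero_le _) (d.1.1 0 j),
      utE_mem_rowZero' m _ hl _⟩
    have h1 : Submodule.inclusion (rowZero'_le m) x =
      op (utE j (Fin.last _) (Fin.le_last _) (1 : k) : ↥(upperTriangularRing (m + 3) k)) • d := by
      apply Subtype.ext
      apply Subtype.ext
      ext a b
      change (Matrix.single 0 (Fin.last (m + 2)) (d.1.1 0 j) :
        Matrix (Fin (m + 3)) (Fin (m + 3)) k) a b = (d.1 * utE j _ (Fin.le_last _) 1).1 a b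
      rw [utE_mul_apply]
      split_ifs with hb
      · by_cases ha : a = 0
        · rw [ha, hb, Matrix.single_apply_same, mul_one]
        · rw [Matrix.single_apply_of_row_ne (Ne.symm ha), d.2 a j ha, zero_mul]
      · rw [Matrix.single_apply_of_col_ne _ _ (Ne.symm hb)]
    have hxD : Submodule.inclusion (rowZero'_le m) x ∈ D := by
      rw [h1]; exact D.smul_mem _ hd
    have h2 : topMap m k x = 0 := Matrix.single_apply_of_col_ne _ _ hl1 _
    have h3 := LinearMap.congr_fun ht x
    rw [LinearMap.comp_apply, h2, map_zero, LinearMap.comp_apply] at h3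
    have h4 : π (Submodule.inclusion (rowZero'_le m) x) = ⟨_, hxD⟩ :=
      LinearMap.congr_fun hπ ⟨_, hxD⟩
    rw [h4] at h3
    have h5 : Submodule.inclusion (rowZero'_le m) x = 0 := congrArg Subtype.val h3.symm
    have h6 : (Matrix.single 0 (Fin.last (m + 2)) (d.1.1 0 j) :
        Matrix (Fin (m + 3)) (Fin (m + 3)) k) = 0 := congrArg (fun z => z.1.1) h5
    have h7 := congrFun (congrFun h6 0) (Fin.last (m + 2))
    rw [Matrix.single_apply_same] at h7
    exact hj h7

end Helpers

section Two

variable {k : Type u} [Field k]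

/-- the upper triangular 2 by 2 matrix with given entries -/
def mk2 (a b d : k) : ↥(upperTriangularRing 2 k) :=
  ⟨!![a, b; 0, d], by
    intro i j hij
    fin_cases i <;> fin_cases j <;> simp at hij ⊢⟩

theorem mk2_eta (x : ↥(upperTriangularRing 2 k)) : x = mk2 (x.1 0 0) (x.1 0 1) (x.1 1 1) := by
  apply Subtype.ext
  have h : x.1 1 0 = 0 := ut_zero x (by decide)
  ext i j
  fin_cases i <;> fin_cases j <;> simp [mk2, h]

theorem mk2_ex (x : ↥(upperTriangularRing 2 k)) : ∃ a b d, x = mk2 a b d := ⟨_, _, _, mk2_eta x⟩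

theorem mk2_mul (a b d a' b' d' : k) :
    mk2 a b d * mk2 a' b' d' = mk2 (a * a') (a * b' + b * d') (d * d') := by
  apply Subtype.ext
  change !![a, b; 0, d] * !![a', b'; 0, d'] = _
  simp [mk2]

theorem mk2_add (a b d a' b' d' : k) :
    mk2 a b d + mk2 a' b' d' = mk2 (a + a') (b + b') (d + d') := by
  apply Subtype.ext
  change !![a, b; 0, d] + !![a', b'; 0, d'] = _
  simp [mk2]

theorem mk2_one : mk2 (1 : k) 0 1 = 1 := by
  apply Subtype.ext
  change !![1, 0; 0, 1] = (1 : Matrix _ _ k)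
  exact Matrix.one_fin_two.symm

theorem mk2_zero : mk2 (0 : k) 0 0 = 0 := by
  apply Subtype.ext
  change !![0, 0; 0, 0] = (0 : Matrix _ _ k)
  ext i j
  fin_cases i <;> fin_cases j <;> simp

section Act
variable {M : Type*} [AddCommGroup M] [Module (↥(upperTriangularRing 2 k))ᵐᵒᵖ M]

theorem mk2_smul_smul (a b d a' b' d' : k) (m : M) :
    op (mk2 a b d) • op (mk2 a' b' d') • m =
      op (mk2 (a' * a) (a' * b + b' * d) (d' * d)) • m := by
  rw [smul_smul, ← op_mul, mk2_mul]

theorem mk2_add_smul (a b d a' b' d' : k) (m : M) :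
    op (mk2 a b d) • m + op (mk2 a' b' d') • m = op (mk2 (a + a') (b + b') (d + d')) • m := by
  rw [← add_smul, ← op_add, mk2_add]

theorem mk2_one_smul (m : M) : op (mk2 (1 : k) 0 1) • m = m := by
  rw [mk2_one, op_one, one_smul]

theorem mk2_zero_smul (m : M) : op (mk2 (0 : k) 0 0) • m = 0 := by
  rw [mk2_zero, op_zero, zero_smul]

end Act

theorem mk2_smul_mem {I : Submodule (↥(upperTriangularRing 2 k))ᵐᵒᵖ ↥(upperTriangularRing 2 k)}
    {a b d : k} (h : mk2 a b d ∈ I) (a' b' d' : k) :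
    mk2 (a * a') (a * b' + b * d') (d * d') ∈ I := by
  rw [← mk2_mul]; exact I.smul_mem (op _) h

theorem mk2_add_mem {I : Submodule (↥(upperTriangularRing 2 k))ᵐᵒᵖ ↥(upperTriangularRing 2 k)}
    {a b d a' b' d' : k} (h : mk2 a b d ∈ I) (h' : mk2 a' b' d' ∈ I) :
    mk2 (a + a') (b + b') (d + d') ∈ I := by
  rw [← mk2_add]; exact I.add_mem h h'

theorem mk2_eq_zero {a b d : k} (h : mk2 a b d = 0) : a = 0 ∧ b = 0 ∧ d = 0 := by
  have h1 : !![a, b; 0, d] = (0 : Matrix (Fin 2) (Fin 2) k) := congrArg Subtype.val h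
  refine ⟨?_, ?_, ?_⟩
  · simpa using congrFun (congrFun h1 0) 0
  · simpa using congrFun (congrFun h1 0) 1
  · simpa using congrFun (congrFun h1 1) 1

/-- A nonzero right ideal in the last column with pairwise proportional elements is an atom. -/
theorem atom_two {I : Submodule (↥(upperTriangularRing 2 k))ᵐᵒᵖ ↥(upperTriangularRing 2 k)}
    (h0 : I ≠ ⊥) (h1 : ∀ a b d, mk2 a b d ∈ I → a = 0)
    (h2 : ∀ b d b' d', mk2 0 b d ∈ I → mk2 0 b' d' ∈ I → b * d' = d * b') : IsAtom I := by
  refine ⟨h0, fun J hJ => ?_⟩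
  by_contra hJ0
  obtain ⟨z, hz, hz0⟩ := (Submodule.ne_bot_iff J).mp hJ0
  apply not_le_of_gt hJ
  intro y hy
  obtain ⟨a, b, d, rfl⟩ := mk2_ex z
  obtain ⟨a', b', d', rfl⟩ := mk2_ex y
  obtain rfl := h1 _ _ _ hy
  obtain rfl := h1 _ _ _ (hJ.le hz)
  have h3 := h2 _ _ _ _ (hJ.le hz) hy
  by_cases hd : d = 0
  · subst hd
    have hb : b ≠ 0 := by
      rintro rfl
      exact hz0 mk2_zero
    have hd' : d' = 0 := by
      rw [zero_mul] at h3
      exact (mul_eq_zero.mp h3).resolve_left hb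
    have h4 := mk2_smul_mem hz 0 0 (b' / b)
    convert h4 using 1
    rw [hd', mul_div_cancel₀ _ hb]
    simp
  · have h4 := mk2_smul_mem hz 0 0 (d' / d)
    convert h4 using 1
    have h5 : b * (d' / d) = b' := by
      rw [← mul_div_assoc, h3, mul_div_cancel_left₀ _ hd]
    rw [mul_div_cancel₀ _ hd, h5]
    simp

theorem inj_of_mininj {M : Type u} [AddCommGroup M] [Module (↥(upperTriangularRing 2 k))ᵐᵒᵖ M]
    (h : IsMininjective (↥(upperTriangularRing 2 k)) M) :
    Module.Injective (↥(upperTriangularRing 2 k))ᵐᵒᵖ M := by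
  have toM : ∀ (I : Submodule (↥(upperTriangularRing 2 k))ᵐᵒᵖ ↥(upperTriangularRing 2 k)),
      IsAtom I → ∀ f : ↥I →ₗ[(↥(upperTriangularRing 2 k))ᵐᵒᵖ] M,
      ∃ m : M, ∀ x : ↥I, f x = op (x : ↥(upperTriangularRing 2 k)) • m := by
    intro I hI f
    obtain ⟨g, hg⟩ := h I hI f
    refine ⟨g 1, fun x => ?_⟩
    rw [← hg x, ← g.map_smul]
    congr 1
    exact (one_mul _).symm
  apply injective_of_right_baer
  intro I f
  have fmul : ∀ (x : ↥(upperTriangularRing 2 k)) (hx : x ∈ I) (r : ↥(upperTriangularRing 2 k))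
      (y : ↥I), y.1 = x * r → f y = op r • f ⟨x, hx⟩ := by
    intro x hx r y hy
    rw [← f.map_smul]
    congr 1
    exact Subtype.ext hy
  by_cases hA : ∃ a b d, mk2 a b d ∈ I ∧ a ≠ 0
  · obtain ⟨a, b, d, hx, ha⟩ := hA
    have he : mk2 1 0 0 ∈ I := by
      have := mk2_smul_mem hx a⁻¹ 0 0
      simpa [ha] using this
    have he2 : ∀ c, mk2 0 c 0 ∈ I := by
      intro c
      have := mk2_smul_mem he 0 c 0
      simpa using this
    by_cases hB : ∃ a b d, mk2 a b d ∈ I ∧ d ≠ 0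
    · obtain ⟨a', b', d', hx', hd'⟩ := hB
      have h1 : mk2 1 0 1 ∈ I := by
        have h3 := mk2_add_mem (mk2_add_mem he (he2 (-(b' * d'⁻¹)))) (mk2_smul_mem hx' 0 0 d'⁻¹)
        simpa [hd'] using h3
      refine ⟨f ⟨_, h1⟩, fun x => ?_⟩
      apply fmul
      rw [mk2_one, one_mul]
    · push Not at hB
      refine ⟨f ⟨_, he⟩, fun x => ?_⟩
      apply fmul
      obtain ⟨a', b', d', hx'⟩ := mk2_ex x.1
      have hd' : d' = 0 := hB a' b' d' (hx' ▸ x.2)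
      rw [hx', mk2_mul, hd']
      simp
  · push Not at hA
    by_cases hC : ∃ b d b' d', mk2 0 b d ∈ I ∧ mk2 0 b' d' ∈ I ∧ b * d' ≠ d * b'
    · obtain ⟨b, d, b', d', hx, hx', hne⟩ := hC
      have hdet : b * d' - d * b' ≠ 0 := sub_ne_zero.mpr hne
      have comb : ∀ s t, mk2 0 (b * s + b' * t) (d * s + d' * t) ∈ I := by
        intro s t
        have := mk2_add_mem (mk2_smul_mem hx 0 0 s) (mk2_smul_mem hx' 0 0 t)
        simpa using this
      have h12 : mk2 (0 : k) 1 0 ∈ I := by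
        convert comb (d' / (b * d' - d * b')) (-d / (b * d' - d * b')) using 2 <;> field_simp <;>
          ring
      have h22 : mk2 (0 : k) 0 1 ∈ I := by
        convert comb (-b' / (b * d' - d * b')) (b / (b * d' - d * b')) using 2 <;> field_simp <;>
          ring
      -- the ideal spanned by e12
      let J : Submodule (↥(upperTriangularRing 2 k))ᵐᵒᵖ ↥(upperTriangularRing 2 k) :=
        Submodule.span _ {mk2 0 1 0}
      have hJI : J ≤ I := by
        rw [Submodule.span_singleton_le_iff_mem]; exact h12
      have hJmem : ∀ x ∈ J, ∃ c, x = mk2 0 c 0 := by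
        intro x hx
        obtain ⟨r, rfl⟩ := Submodule.mem_span_singleton.mp hx
        obtain ⟨p, q, s, hr⟩ := mk2_ex (unop r)
        refine ⟨s, ?_⟩
        change mk2 0 1 0 * unop r = _
        rw [hr, mk2_mul]; simp
      have hm2 : ∀ {a b d c : k}, mk2 a b d = mk2 0 c 0 → a = 0 ∧ d = 0 := by
        intro a b d c h
        have h1 : !![a, b; 0, d] = !![0, c; 0, 0] := congrArg Subtype.val h
        exact ⟨by simpa using congrFun (congrFun h1 0) 0, by simpa using congrFun (congrFun h1 1) 1⟩
      have hJat : IsAtom J := by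
        apply atom_two
        · intro hb
          have : mk2 (0 : k) 1 0 ∈ J := Submodule.mem_span_singleton_self _
          rw [hb, Submodule.mem_bot] at this
          exact one_ne_zero (mk2_eq_zero this).2.1
        · intro a b d hx
          obtain ⟨c, hc⟩ := hJmem _ hx
          exact (hm2 hc).1
        · intro b d b' d' hx hx'
          obtain ⟨c, hc⟩ := hJmem _ hx
          obtain ⟨c', hc'⟩ := hJmem _ hx'
          rw [(hm2 hc).2, (hm2 hc').2, mul_zero, zero_mul]
      obtain ⟨m', hm'⟩ := toM J hJat (f ∘ₗ Submodule.inclusion hJI)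
      have h12' : f ⟨_, h12⟩ = op (mk2 (0 : k) 1 0) • m' :=
        hm' ⟨_, Submodule.mem_span_singleton_self _⟩
      have h22' : f ⟨_, h22⟩ = op (mk2 (0 : k) 0 1) • f ⟨_, h22⟩ := by
        apply fmul
        rw [mk2_mul]; simp
      refine ⟨op (mk2 (1 : k) 0 0) • m' + op (mk2 (0 : k) 0 1) • f ⟨_, h22⟩, fun x => ?_⟩
      obtain ⟨a, p, q, hx⟩ := mk2_ex x.1
      have ha : a = 0 := hA a p q (hx ▸ x.2)
      subst ha
      have hxs : x = op (mk2 0 0 p) • (⟨_, h12⟩ : ↥I) + op (mk2 0 0 q) • (⟨_, h22⟩ : ↥I) := by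
        apply Subtype.ext
        change x.1 = mk2 0 1 0 * mk2 0 0 p + mk2 0 0 1 * mk2 0 0 q
        rw [hx, mk2_mul, mk2_mul, mk2_add]; simp
      rw [hx]
      conv_lhs => rw [hxs, f.map_add, f.map_smul, f.map_smul, h12']
      rw [smul_add, mk2_smul_smul, mk2_smul_smul, mk2_smul_smul]
      simp
    · push Not at hC
      by_cases h0 : I = ⊥
      · refine ⟨0, fun x => ?_⟩
        have : x = 0 := by
          apply Subtype.ext
          exact (Submodule.eq_bot_iff I).mp h0 _ x.2
        rw [this, map_zero, smul_zero]
      · exact toM I (atom_two h0 hA hC) f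

theorem almost_two {S : Type u} [AddCommGroup S] [Module (↥(upperTriangularRing 2 k))ᵐᵒᵖ S]
    (hS : IsSimpleModule (↥(upperTriangularRing 2 k))ᵐᵒᵖ S) :
    IsAlmostInjective.{u, u, u} (↥(upperTriangularRing 2 k)) S := by
  by_cases hz : ∀ s : S, op (mk2 (0 : k) 0 1) • s = 0
  · have hmin : IsMininjective (↥(upperTriangularRing 2 k)) S := by
      intro I hI f
      refine ⟨0, fun x => ?_⟩
      have hx := atom_le_lastCol hI x.2
      have h1 : op (mk2 (0 : k) 0 1) • x = x := by
        apply Subtype.ext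
        change x.1 * mk2 0 0 1 = x.1
        obtain ⟨a, b, d, hx'⟩ := mk2_ex x.1
        have ha : a = 0 := by
          have := hx 0 0 (by decide)
          rw [hx'] at this
          simpa [mk2] using this
        rw [hx', mk2_mul, ha]; simp
      rw [← h1, f.map_smul, hz]; rfl
    have hinj := inj_of_mininj hmin
    intro A B _ _ _ _ i hi f
    obtain ⟨g, hg⟩ := hinj.out i hi f
    exact Or.inl ⟨g, LinearMap.ext hg⟩
  · have hsurj := (isSimpleModule_iff_toSpanSingleton_surjective.mp hS).2
    -- the idempotent acts as identity
    have hid : ∀ s : S, op (mk2 (0 : k) 0 1) • s = s := by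
      push Not at hz
      obtain ⟨s0, hs0⟩ := hz
      intro s
      obtain ⟨r, hr⟩ := hsurj _ hs0 s
      rw [LinearMap.toSpanSingleton_apply] at hr
      obtain ⟨p, q, t, hr'⟩ := mk2_ex (unop r)
      have hr2 : r = op (mk2 p q t) := by rw [← hr', op_unop]
      rw [← hr, hr2]
      simp [mk2_smul_smul]
    have hact : ∀ (a b d : k) (s : S), op (mk2 a b d) • s = op (mk2 d 0 d) • s := by
      intro a b d s
      rw [← hid s, mk2_smul_smul, mk2_smul_smul]; simp
    intro A B _ _ _ _ i hi f
    let σ : k →+* (↥(upperTriangularRing 2 k))ᵐᵒᵖ :=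
      { toFun := fun c => op (mk2 c 0 c)
        map_one' := by rw [mk2_one, op_one]
        map_zero' := by rw [mk2_zero, op_zero]
        map_add' := fun c c' => by rw [← op_add, mk2_add, add_zero]
        map_mul' := fun c c' => by rw [← op_mul, mk2_mul]; simp [mul_comm] }
    let _ : Module k A := Module.compHom A σ
    let _ : Module k B := Module.compHom B σ
    let _ : Module k S := Module.compHom S σ
    have sA : ∀ (c : k) (a : A), c • a = op (mk2 c 0 c) • a := fun _ _ => rfl
    have sB : ∀ (c : k) (a : B), c • a = op (mk2 c 0 c) • a := fun _ _ => rfl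
    have sS : ∀ (c : k) (a : S), c • a = op (mk2 c 0 c) • a := fun _ _ => rfl
    let ik : A →ₗ[k] B :=
      { toFun := i, map_add' := i.map_add, map_smul' := fun c a => i.map_smul (σ c) a }
    let fk : A →ₗ[k] S :=
      { toFun := f, map_add' := f.map_add, map_smul' := fun c a => f.map_smul (σ c) a }
    by_cases hex : ∃ (a : A) (b : B), op (mk2 (0 : k) 1 0) • b = i a ∧ f a ≠ 0
    · right
      obtain ⟨a0, b0, hab0, hfa⟩ := hex
      -- replace b0 by b0 e11
      obtain ⟨b, hb, hb11⟩ : ∃ b : B, op (mk2 (0 : k) 1 0) • b = i a0 ∧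
          op (mk2 (1 : k) 0 0) • b = b := by
        refine ⟨op (mk2 (1 : k) 0 0) • b0, ?_, ?_⟩
        · rw [mk2_smul_smul, ← hab0]; simp
        · rw [mk2_smul_smul]; simp
      -- functional on S
      have hinjS : ∀ c : k, ((LinearMap.toSpanSingleton k S (f a0)) c ∈ (⊥ : Submodule k S)) →
          (LinearMap.id : k →ₗ[k] k) c = 0 := by
        intro c hc
        have : c • f a0 = 0 := hc
        exact (smul_eq_zero.mp this).resolve_right hfa
      obtain ⟨ψ, hψ, -⟩ := exists_ext_aux (LinearMap.toSpanSingleton k S (f a0)) ⊥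
        LinearMap.id hinjS
      have hψ0 : ψ (f a0) = 1 := by
        have := hψ 1
        simpa using this
      have hψs : ∀ s : S, ∃ c : k, s = c • f a0 := by
        intro s
        obtain ⟨r, hr⟩ := hsurj _ hfa s
        rw [LinearMap.toSpanSingleton_apply] at hr
        obtain ⟨p, q, t, hr'⟩ := mk2_ex (unop r)
        have hr2 : r = op (mk2 p q t) := by rw [← hr', op_unop]
        exact ⟨t, by rw [← hr, hr2, hact, sS]⟩
      obtain ⟨φ, hφ, -⟩ := exists_ext_aux ik ⊥ (ψ ∘ₗ fk) (by
        intro a ha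
        have : i a = 0 := ha
        have : a = 0 := hi (by rw [this, map_zero])
        rw [this, map_zero])
      have hφ' : ∀ a, φ (i a) = ψ (f a) := hφ
      have hφc : ∀ (c : k) (y : B), φ (op (mk2 c 0 c) • y) = c * φ y := fun c y => φ.map_smul c y
      have hψc : ∀ (c : k) (y : S), ψ (op (mk2 c 0 c) • y) = c * ψ y := fun c y => ψ.map_smul c y
      obtain ⟨D, hDdef⟩ : ∃ D : Submodule (↥(upperTriangularRing 2 k))ᵐᵒᵖ B,
          D = Submodule.span _ {b} := ⟨_, rfl⟩
      have hbD : b ∈ D := hDdef ▸ Submodule.mem_span_singleton_self _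
      obtain ⟨bD, hbD'⟩ : ∃ bD : ↥D, (bD : B) = b := ⟨⟨b, hbD⟩, rfl⟩
      have hDadd : ∀ a b d a' b' d' : k, op (mk2 a b d) • bD + op (mk2 a' b' d') • bD =
          op (mk2 (a + a') (b + b') (d + d')) • bD := fun _ _ _ _ _ _ => mk2_add_smul _ _ _ _ _ _ bD
      have hDmul : ∀ a b d a' b' d' : k, op (mk2 a b d) • op (mk2 a' b' d') • bD =
          op (mk2 (a' * a) (a' * b + b' * d) (d' * d)) • bD :=
        fun _ _ _ _ _ _ => mk2_smul_smul _ _ _ _ _ _ bD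
      have hsplit : ∀ (p q t : k) (y : B), op (mk2 p q t) • y =
          op (mk2 p 0 0) • y + op (mk2 0 q 0) • y + op (mk2 0 0 t) • y := by
        intro p q t y
        rw [mk2_add_smul, mk2_add_smul]; simp
      have hφ12 : ∀ (q : k) (y : B), φ (op (mk2 0 q 0) • y) = q * φ (op (mk2 (0 : k) 1 0) • y) := by
        intro q y
        rw [← hφc, mk2_smul_smul]; simp
      have hφ22 : ∀ (q : k) (y : B), φ (op (mk2 0 0 q) • y) = q * φ (op (mk2 (0 : k) 0 1) • y) := by
        intro q y
        rw [← hφc, mk2_smul_smul]; simp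
      have hφq : ∀ (q t : k) (y : B), φ (op (mk2 0 q t) • y) =
          q * φ (op (mk2 (0 : k) 1 0) • y) + t * φ (op (mk2 (0 : k) 0 1) • y) := by
        intro q t y
        rw [← hφ12, ← hφ22, ← map_add, mk2_add_smul]; simp
      let π : B →ₗ[(↥(upperTriangularRing 2 k))ᵐᵒᵖ] ↥D :=
        { toFun := fun y => op (mk2 (φ (op (mk2 (0 : k) 1 0) • y)) (φ (op (mk2 (0 : k) 0 1) • y)) 0) •
            bD
          map_add' := fun y z => by
            rw [hDadd]; simp only [smul_add, map_add, add_zero]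
          map_smul' := fun r y => by
            obtain ⟨p, q, t, hr'⟩ := mk2_ex (unop r)
            have hr2 : r = op (mk2 p q t) := by rw [← hr', op_unop]
            have e1 : φ (op (mk2 (0 : k) 1 0) • op (mk2 p q t) • y) =
                p * φ (op (mk2 (0 : k) 1 0) • y) := by
              rw [mk2_smul_smul, ← hφ12]; simp
            have e2 : φ (op (mk2 (0 : k) 0 1) • op (mk2 p q t) • y) =
                q * φ (op (mk2 (0 : k) 1 0) • y) + t * φ (op (mk2 (0 : k) 0 1) • y) := by
              rw [mk2_smul_smul, ← hφq]; simp
            rw [hr2, RingHom.id_apply, hDmul, e1, e2]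
            congr 3 <;> ring }
      have hπ : ∀ y, π y = op (mk2 (φ (op (mk2 (0 : k) 1 0) • y)) (φ (op (mk2 (0 : k) 0 1) • y)) 0) •
            bD := fun _ => rfl
      let h : S →ₗ[(↥(upperTriangularRing 2 k))ᵐᵒᵖ] ↥D :=
        { toFun := fun s => op (mk2 0 (ψ s) 0) • bD
          map_add' := fun y z => by
            rw [hDadd]; simp only [smul_add, map_add, add_zero]
          map_smul' := fun r y => by
            obtain ⟨p, q, t, hr'⟩ := mk2_ex (unop r)
            have hr2 : r = op (mk2 p q t) := by rw [← hr', op_unop]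
            rw [hr2, RingHom.id_apply, hDmul, hact, hψc]
            congr 3 <;> ring }
      have hπb : π b = bD := by
        have e1 : φ (op (mk2 (0 : k) 0 1) • b) = 0 := by
          rw [← hb11, mk2_smul_smul]
          simp [mk2_zero_smul]
        rw [hπ, hb, hφ', hψ0, e1]
        exact Subtype.ext (by rw [Submodule.coe_smul, hbD', hb11])
      refine ⟨D, ?_, π, ?_, h, ?_⟩
      · intro hD
        rw [hD, Submodule.mem_bot] at hbD
        rw [hbD, smul_zero] at hb
        apply hfa
        have : a0 = 0 := hi (by rw [← hb, map_zero])
        rw [this, map_zero]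
      · ext ⟨d, hd⟩
        obtain ⟨r, rfl⟩ := Submodule.mem_span_singleton.mp (hDdef ▸ hd)
        change ((π (r • b) : ↥D) : B) = r • b
        rw [π.map_smul, hπb, Submodule.coe_smul, hbD']
      · ext a
        have e1 : φ (op (mk2 (0 : k) 1 0) • i a) = 0 := by
          rw [← i.map_smul, hφ', f.map_smul, hact, mk2_zero_smul, map_zero]
        have e2 : φ (op (mk2 (0 : k) 0 1) • i a) = ψ (f a) := by
          rw [← i.map_smul, hφ', f.map_smul, hid]
        change ((h (f a) : ↥D) : B) = (π (i a) : ↥D)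
        rw [hπ, e1, e2]
        rfl
    · left
      push Not at hex
      let N : Submodule k B :=
        { carrier := {y | ∃ b : B, op (mk2 (0 : k) 1 0) • b = y}
          zero_mem' := ⟨0, smul_zero _⟩
          add_mem' := by
            rintro _ _ ⟨x, rfl⟩ ⟨y, rfl⟩
            exact ⟨x + y, smul_add _ _ _⟩
          smul_mem' := by
            rintro c _ ⟨x, rfl⟩
            refine ⟨c • x, ?_⟩
            rw [sB, sB, mk2_smul_smul, mk2_smul_smul]; simp }
      obtain ⟨φ, hφ, hφN⟩ := exists_ext_aux ik N fk (by
        rintro a ⟨b, hb⟩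
        exact hex a b hb)
      have hφc : ∀ (c : k) (y : B), φ (op (mk2 c 0 c) • y) = op (mk2 c 0 c) • φ y :=
        fun c y => φ.map_smul c y
      refine ⟨{ toFun := fun y => φ (op (mk2 (0 : k) 0 1) • y)
                map_add' := fun y z => by rw [smul_add, map_add]
                map_smul' := fun r y => ?_ }, ?_⟩
      · obtain ⟨p, q, t, hr'⟩ := mk2_ex (unop r)
        have hr2 : r = op (mk2 p q t) := by rw [← hr', op_unop]
        have e0 : op (mk2 (0 : k) 0 1) • op (mk2 p q t) • y =
            op (mk2 (0 : k) 1 0) • op (mk2 q 0 0) • y +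
              op (mk2 t 0 t) • op (mk2 (0 : k) 0 1) • y := by
          rw [mk2_smul_smul, mk2_smul_smul, mk2_smul_smul, mk2_add_smul]; simp
        rw [hr2, RingHom.id_apply, hact, e0, map_add, hφN _ ⟨_, rfl⟩, zero_add, hφc]
      · ext a
        change φ (op (mk2 (0 : k) 0 1) • i a) = f a
        rw [← i.map_smul]
        refine (hφ _).trans ?_
        change f _ = f a
        rw [f.map_smul, hid]

end Two

/-- For `R = UT_n(k)` (`n ≥ 2`, `k` a field) the following are
equivalent: (1) `R` is a right almost V-ring; (2) every mininjective right `R`-module is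
injective; (3) `n = 2`. -/
theorem upperTriangular_tfae (k : Type u) [Field k] (n : ℕ) (hn : 2 ≤ n) :
    List.TFAE
      [ RightAlmostVRing.{u, u, u} ↥(upperTriangularRing n k),
        ∀ (M : Type u) [AddCommGroup M] [Module (↥(upperTriangularRing n k))ᵐᵒᵖ M],
          IsMininjective (↥(upperTriangularRing n k)) M →
            Module.Injective (↥(upperTriangularRing n k))ᵐᵒᵖ M,
        n = 2 ] := by
  tfae_have 3 → 1 := by
    rintro rfl
    intro S _ _ hS
    exact almost_two hS
  tfae_have 3 → 2 := by
    rintro rfl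
    intro M _ _ hM
    exact inj_of_mininj hM
  tfae_have 1 → 3 := by
    intro h
    by_contra hne
    obtain ⟨m, rfl⟩ : ∃ m, n = m + 3 := ⟨n - 3, by omega⟩
    exact SOne_not_almost m (h _ (SOne_simple m))
  tfae_have 2 → 3 := by
    intro h
    by_contra hne
    obtain ⟨m, rfl⟩ : ∃ m, n = m + 3 := ⟨n - 3, by omega⟩
    exact SOne_not_inj m (h _ (SOne_mininj m))
  tfae_finish
end
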